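/- Let R be a vertex-transitive q × q real matrix whose support graph (i ≠ j adjacent iff R i j ≠ 0) is connected and whose common row sum equals 1, let χ(X) = ∏ (1 − λ·X) over the q − 1 eigenvalues λ of R (with multiplicity) other than the simple eigenvalue 1, and let σ > 0. Then for every sequence m : ℕ → ℕ for which there exist 0 < a ≤ b < 1/2 with a ≤ m(n)/n ≤ b for all large n, the ratio g^{(0)}_{R,σ}(n, m(n)) / [ (n^{2m}/(2^m · m!)) · (1 − 2m/n)^{(1−σ)/2} · (qσ)^{n−m} · χ(2m/n)^{−σ/2} ] tends to 1 as n → ∞ (where m = m(n)). -/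

import Mathlib

/-!
A multigraph with `i` edges, weighted by `kappa`, is up to normalisation the result of drawing `i`
ordered pairs of vertices uniformly at random, so the weight can be followed edge by edge. Divide
the coloured weight of `E` by the value it would have if `E` were a forest. By
vertex-transitivity, an edge joining two components leaves this normalised weight unchanged: the
colour of one endpoint is uniform and independent of everything on the other side. An edge
closing a cycle multiplies it, in the spectral decomposition of `R`, by `σ` times a sum of
eigenvector correlations between the colours of its endpoints, weighted by the eigenvalues `λⱼ`.
Each such correlation picks up a factor `λⱼ` per tree edge on the path between the endpoints, and in
the subcritical regime its sum over the tree component of a random vertex has mean `1 / (1 - λⱼ t)`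
up to `O(1 / n)`, with `t = 2 i / n`.

Hence the mean normalised weight `h i` over multigraphs without complex components satisfies
`h (i + 1) = h i * (1 + r (2 i / n) / n) + O(1 / n ^ 2)`, where
`r t = σ ∑ⱼ λⱼ / (1 - λⱼ t) - 1 / (1 - t)`, the last term accounting for unicyclic components that
would become complex. This is an Euler scheme for a linear differential equation whose solution is
`(1 - t)^(1/2) ∏ⱼ (1 - λⱼ t)^(-σ/2)`; the simple eigenvalue `1` contributes `(1 - t)^(-σ/2)`.
-/

namespace Inhomog

noncomputable section

/-- Compensation factor of a multigraph given as a multiset of unordered pairs. -/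
def kappa {n : ℕ} (E : Multiset (Sym2 (Fin n))) : ℚ :=
  (∏ v : Fin n, ((2 : ℚ) ^ (E.count s(v, v)))⁻¹) *
    ∏ e ∈ E.toFinset, ((E.count e).factorial : ℚ)⁻¹

/-- Support graph of a multigraph: `u ≠ v` adjacent iff `s(u,v) ∈ E`. -/
def supportGraph {n : ℕ} (E : Multiset (Sym2 (Fin n))) : SimpleGraph (Fin n) :=
  SimpleGraph.fromRel fun u v => s(u, v) ∈ E

/-- Number of connected components of the support graph. -/
def cc {n : ℕ} (E : Multiset (Sym2 (Fin n))) : ℕ :=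
  Nat.card (supportGraph E).ConnectedComponent

/-- Weight of a colored multigraph. -/
def weight {q n : ℕ} (R : Matrix (Fin q) (Fin q) ℝ) (σ : ℝ)
    (E : Multiset (Sym2 (Fin n))) (c : Fin n → Fin q) : ℝ :=
  (kappa E : ℝ) * σ ^ cc E *
    ∏ e ∈ E.toFinset, (R (c e.inf) (c e.sup)) ^ (E.count e)

/-- Total weight of `(R,σ)`-multigraphs with `n` vertices and `m` edges. -/
def g {q : ℕ} (R : Matrix (Fin q) (Fin q) ℝ) (σ : ℝ) (n m : ℕ) : ℝ :=
  ∑ E : Sym (Sym2 (Fin n)) m, ∑ c : Fin n → Fin q, weight R σ E.1 c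

/-- A matrix is vertex-transitive if it is symmetric, has nonnegative entries,
and its automorphism group acts transitively on indices. -/
def IsVertexTransitive {q : ℕ} (R : Matrix (Fin q) (Fin q) ℝ) : Prop :=
  R.IsSymm ∧ (∀ i j, 0 ≤ R i j) ∧
    ∀ i j : Fin q, ∃ π : Equiv.Perm (Fin q), π i = j ∧ ∀ a b, R (π a) (π b) = R a b


open scoped Classical in
/-- Number of edges of `E` (with multiplicity) whose endpoints lie in the
connected component `K` of the support graph. -/
def edgesIn {n : ℕ} (E : Multiset (Sym2 (Fin n)))
    (K : (supportGraph E).ConnectedComponent) : ℕ :=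
  Multiset.card
    (E.filter fun e => ∀ v ∈ e, (supportGraph E).connectedComponentMk v = K)

/-- Number of vertices of the connected component `K` of the support graph. -/
def vertsIn {n : ℕ} (E : Multiset (Sym2 (Fin n)))
    (K : (supportGraph E).ConnectedComponent) : ℕ :=
  Nat.card K.supp

/-- Excess of the complex part of `E`: `Σ_S max (0, e_S − |S|)` over the
connected components `S` of the support graph. -/
def complexExcess {n : ℕ} (E : Multiset (Sym2 (Fin n))) : ℕ :=
  ∑ᶠ K : (supportGraph E).ConnectedComponent, (edgesIn E K - vertsIn E K)

/-- `E` has no complex component. -/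
def NoComplex {n : ℕ} (E : Multiset (Sym2 (Fin n))) : Prop :=
  ∀ K : (supportGraph E).ConnectedComponent, edgesIn E K ≤ vertsIn E K

open scoped Classical in
/-- Total weight of `(R,σ)`-multigraphs with no complex component. -/
def g0 {q : ℕ} (R : Matrix (Fin q) (Fin q) ℝ) (σ : ℝ) (n m : ℕ) : ℝ :=
  ∑ E : Sym (Sym2 (Fin n)) m, ∑ c : Fin n → Fin q,
    if NoComplex E.1 then weight R σ E.1 c else 0

open scoped Classical in
/-- Total weight of `(R,σ)`-multigraphs whose complex part has excess `k`. -/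
def gk {q : ℕ} (R : Matrix (Fin q) (Fin q) ℝ) (σ : ℝ) (n m k : ℕ) : ℝ :=
  ∑ E : Sym (Sym2 (Fin n)) m, ∑ c : Fin n → Fin q,
    if complexExcess E.1 = k then weight R σ E.1 c else 0

/-! ### Components of a multigraph -/

/-- A multigraph on `Fin n`, given by the multiset of its edges. -/
abbrev Multigraph (n : ℕ) := Multiset (Sym2 (Fin n))

/-- Two vertices are joined by a path of edges of `E`. -/
abbrev Reach {n : ℕ} (E : Multigraph n) (u v : Fin n) : Prop := (supportGraph E).Reachable u v

instance {n : ℕ} (E : Multigraph n) (u v : Fin n) : Decidable (Reach E u v) :=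
  Classical.propDecidable _

instance {n : ℕ} (E : Multigraph n) : Decidable (NoComplex E) := Classical.propDecidable _

/-- The vertex set of the component of `v`. -/
def component {n : ℕ} (E : Multigraph n) (v : Fin n) : Finset (Fin n) := {u | Reach E u v}

/-- The number of vertices of the component of `v`. -/
def order {n : ℕ} (E : Multigraph n) (v : Fin n) : ℕ := (component E v).card

/-- The number of edges, with multiplicity, of the component of `v`. -/
def size {n : ℕ} (E : Multigraph n) (v : Fin n) : ℕ :=
  (E.filter fun e => ∀ w ∈ e, Reach E w v).card

/-- The component of `v` is a tree. Since `order E v ≤ size E v + 1` always holds, this amounts to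
having fewer edges than vertices. -/
def IsTreeAt {n : ℕ} (E : Multigraph n) (v : Fin n) : Prop := size E v < order E v

instance {n : ℕ} (E : Multigraph n) : DecidablePred (IsTreeAt E) := fun v =>
  inferInstanceAs (Decidable (size E v < order E v))

section Reach

variable {n : ℕ} {E : Multigraph n} {u v x y : Fin n}

lemma reach_of_mem (h : s(u, v) ∈ E) : Reach E u v := by
  by_cases huv : u = v
  · exact huv ▸ .refl _
  · exact SimpleGraph.Adj.reachable (by simp [supportGraph, huv, h])

lemma reach_cons_self (E : Multigraph n) (x y : Fin n) : Reach (s(x, y) ::ₘ E) x y :=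
  reach_of_mem (Multiset.mem_cons_self _ _)

lemma Reach.cons {e : Sym2 (Fin n)} (h : Reach E u v) : Reach (e ::ₘ E) u v := by
  refine SimpleGraph.Reachable.mono (SimpleGraph.le_iff_adj.2 fun _ _ hab => ?_) h
  exact ⟨hab.1, hab.2.imp Multiset.mem_cons_of_mem Multiset.mem_cons_of_mem⟩

lemma reach_induction {P : Fin n → Prop} (refl : P u)
    (step : ∀ a b, s(a, b) ∈ E → P a → P b) (h : Reach E u v) : P v := by
  rw [Reach, SimpleGraph.reachable_iff_reflTransGen] at h
  induction h with
  | refl => exact refl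
  | tail _ hadj ih =>
    rcases hadj.2 with h | h
    · exact step _ _ h ih
    · exact step _ _ (Sym2.eq_swap ▸ h) ih

lemma reach_zero_iff : Reach (0 : Multigraph n) u v ↔ u = v :=
  ⟨reach_induction rfl (by simp), fun h => h ▸ .refl _⟩

lemma reach_cons_iff : Reach (s(x, y) ::ₘ E) u v ↔
    Reach E u v ∨ (Reach E u x ∧ Reach E y v) ∨ (Reach E u y ∧ Reach E x v) := by
  constructor
  · refine reach_induction (P := fun v => Reach E u v ∨ (Reach E u x ∧ Reach E y v) ∨
      (Reach E u y ∧ Reach E x v)) (.inl <| .refl _) fun a b hab ih => ?_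
    rcases Multiset.mem_cons.1 hab with hab | hab
    · rcases Sym2.eq_iff.1 hab with ⟨rfl, rfl⟩ | ⟨rfl, rfl⟩
      · rcases ih with h | h | h
        exacts [.inr (.inl ⟨h, .refl _⟩), .inr (.inl ⟨h.1, .refl _⟩), .inl h.1]
      · rcases ih with h | h | h
        exacts [.inr (.inr ⟨h, .refl _⟩), .inl h.1, .inr (.inr ⟨h.1, .refl _⟩)]
    · have hab := reach_of_mem hab
      exact ih.imp (·.trans hab) (.imp (.imp_right (·.trans hab)) (.imp_right (·.trans hab)))
  · have hxy := reach_cons_self E x y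
    rintro (h | h | h)
    exacts [h.cons, (h.1.cons.trans hxy).trans h.2.cons, (h.1.cons.trans hxy.symm).trans h.2.cons]

lemma reach_cons_iff_of_reach (h : Reach E x y) :
    Reach (s(x, y) ::ₘ E) u v ↔ Reach E u v := by
  refine reach_cons_iff.trans ⟨?_, .inl⟩
  rintro (h' | h' | h')
  exacts [h', (h'.1.trans h).trans h'.2, (h'.1.trans h.symm).trans h'.2]

lemma reach_cons_iff_left (hv : Reach E x v) :
    Reach (s(x, y) ::ₘ E) u v ↔ Reach E u x ∨ Reach E u y := by
  rw [reach_cons_iff]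
  refine ⟨?_, Or.imp (·.trans hv) fun h => .inr ⟨h, hv⟩⟩
  rintro (h | h | h)
  exacts [.inl (h.trans hv.symm), .inl h.1, .inr h.1]

lemma reach_cons_iff_away (hx : ¬ Reach E x v) (hy : ¬ Reach E y v) :
    Reach (s(x, y) ::ₘ E) u v ↔ Reach E u v := by
  simp [reach_cons_iff, hx, hy]

lemma forall_mem_edge_reach_iff {e : Sym2 (Fin n)} (he : e ∈ E) (hu : u ∈ e) :
    (∀ w ∈ e, Reach E w v) ↔ Reach E u v := by
  refine ⟨fun h => h u hu, fun h w hw => ?_⟩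
  by_cases hwu : w = u
  · exact hwu ▸ h
  · exact (reach_of_mem ((Sym2.mem_and_mem_iff hwu).1 ⟨hw, hu⟩ ▸ he)).trans h

end Reach

section Component

variable {n : ℕ} {E : Multigraph n} {u v w x y : Fin n}

@[simp] lemma mem_component : u ∈ component E v ↔ Reach E u v := by simp [component]

lemma self_mem_component (E : Multigraph n) (v : Fin n) : v ∈ component E v := by simp

lemma component_congr (h : Reach E u v) : component E u = component E v := by
  ext w; simpa using ⟨fun h' => h'.trans h, fun h' => h'.trans h.symm⟩

lemma disjoint_component (h : ¬ Reach E u v) : Disjoint (component E u) (component E v) := by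
  rw [Finset.disjoint_left]
  intro w hu hv
  simp only [mem_component] at hu hv
  exact h (hu.symm.trans hv)

lemma component_cons_of_reach (h : Reach E x y) (v : Fin n) :
    component (s(x, y) ::ₘ E) v = component E v := by
  simp only [component, reach_cons_iff_of_reach h]

lemma component_cons_left (hv : Reach E x v) :
    component (s(x, y) ::ₘ E) v = component E x ∪ component E y := by
  ext w; simp [reach_cons_iff_left hv]

lemma component_cons_away (hx : ¬ Reach E x v) (hy : ¬ Reach E y v) :
    component (s(x, y) ::ₘ E) v = component E v := by
  simp only [component, reach_cons_iff_away hx hy]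

end Component

section OrderSize

variable {n : ℕ} {E : Multigraph n} {u v x y : Fin n}

lemma order_congr (h : Reach E u v) : order E u = order E v := by
  rw [order, component_congr h, order]

lemma size_congr (h : Reach E u v) : size E u = size E v := by
  have : ∀ w, Reach E w u ↔ Reach E w v := fun w => ⟨(·.trans h), (·.trans h.symm)⟩
  simp only [size, this]

lemma order_zero (v : Fin n) : order (0 : Multigraph n) v = 1 := by
  simp [order, component, reach_zero_iff, Finset.filter_eq']

lemma order_cons_of_reach (h : Reach E x y) (v : Fin n) :
    order (s(x, y) ::ₘ E) v = order E v := by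
  rw [order, component_cons_of_reach h, order]

lemma size_cons_of_reach (h : Reach E x y) (v : Fin n) :
    size (s(x, y) ::ₘ E) v = size E v + if Reach E x v then 1 else 0 := by
  simp only [size, reach_cons_iff_of_reach h]
  split_ifs with hx
  · rw [Multiset.filter_cons_of_pos _ (by simpa using ⟨hx, h.symm.trans hx⟩), Multiset.card_cons]
  · rw [Multiset.filter_cons_of_neg _ (by simp [hx]), add_zero]

lemma order_cons_left (h : ¬ Reach E x y) (hv : Reach E x v) :
    order (s(x, y) ::ₘ E) v = order E x + order E y := by
  rw [order, component_cons_left hv, Finset.card_union_of_disjoint (disjoint_component h), order,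
    order]

lemma size_cons_left (h : ¬ Reach E x y) (hv : Reach E x v) :
    size (s(x, y) ::ₘ E) v = size E x + size E y + 1 := by
  simp only [size, reach_cons_iff_left hv]
  have hsplit : ∀ e ∈ E, (∀ w ∈ e, Reach E w x ∨ Reach E w y) ↔
      (∀ w ∈ e, Reach E w x) ∨ ∀ w ∈ e, Reach E w y := by
    refine fun e he => ⟨fun H => ?_, fun H w hw => H.imp (· w hw) (· w hw)⟩
    obtain ⟨a, ha⟩ : ∃ a, a ∈ e := ⟨_, Sym2.out_fst_mem e⟩
    exact (H a ha).imp (forall_mem_edge_reach_iff he ha).2 (forall_mem_edge_reach_iff he ha).2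
  have hdisj : E.filter (fun e => (∀ w ∈ e, Reach E w x) ∧ ∀ w ∈ e, Reach E w y) = 0 :=
    Multiset.filter_eq_nil.2 fun e _ H =>
      h ((H.1 _ (Sym2.out_fst_mem e)).symm.trans (H.2 _ (Sym2.out_fst_mem e)))
  rw [Multiset.filter_cons_of_pos _ (by simp), Multiset.card_cons, ← Multiset.card_add,
    Multiset.filter_add_filter, hdisj, add_zero, Multiset.filter_congr hsplit]

lemma order_cons_away (hx : ¬ Reach E x v) (hy : ¬ Reach E y v) :
    order (s(x, y) ::ₘ E) v = order E v := by
  rw [order, component_cons_away hx hy, order]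

lemma size_cons_away (hx : ¬ Reach E x v) (hy : ¬ Reach E y v) :
    size (s(x, y) ::ₘ E) v = size E v := by
  simp only [size, reach_cons_iff_away hx hy]
  rw [Multiset.filter_cons_of_neg _ (by simp [hx])]

lemma order_le_size_add_one (E : Multigraph n) (v : Fin n) : order E v ≤ size E v + 1 := by
  induction E using Multiset.induction generalizing v with
  | empty => simp [order_zero]
  | cons e E ih =>
    induction e using Sym2.ind with | _ x y
    by_cases h : Reach E x y
    · rw [order_cons_of_reach h, size_cons_of_reach h]
      have := ih v
      omega
    have hx := ih x
    have hy := ih y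
    by_cases hxv : Reach E x v
    · rw [order_cons_left h hxv, size_cons_left h hxv]
      omega
    by_cases hyv : Reach E y v
    · rw [Sym2.eq_swap, order_cons_left (h ·.symm) hyv, size_cons_left (h ·.symm) hyv]
      omega
    rw [order_cons_away hxv hyv, size_cons_away hxv hyv]
    exact ih v

end OrderSize

section IsTreeAt

variable {n : ℕ} {E : Multigraph n} {u v x y : Fin n}

lemma IsTreeAt.congr (h : Reach E u v) : IsTreeAt E u ↔ IsTreeAt E v := by
  rw [IsTreeAt, IsTreeAt, order_congr h, size_congr h]

lemma isTreeAt_zero (v : Fin n) : IsTreeAt (0 : Multigraph n) v := by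
  simp [IsTreeAt, size, order_zero]

lemma isTreeAt_cons_of_reach (h : Reach E x y) :
    IsTreeAt (s(x, y) ::ₘ E) v ↔ IsTreeAt E v ∧ ¬ Reach E x v := by
  have := order_le_size_add_one E v
  simp only [IsTreeAt, order_cons_of_reach h, size_cons_of_reach h]
  split_ifs with hx <;> simp [hx]
  omega

lemma isTreeAt_cons_left (h : ¬ Reach E x y) (hv : Reach E x v) :
    IsTreeAt (s(x, y) ::ₘ E) v ↔ IsTreeAt E x ∧ IsTreeAt E y := by
  have hx := order_le_size_add_one E x
  have hy := order_le_size_add_one E y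
  rw [IsTreeAt, order_cons_left h hv, size_cons_left h hv, IsTreeAt, IsTreeAt]
  omega

lemma isTreeAt_cons_right (h : ¬ Reach E x y) (hv : Reach E y v) :
    IsTreeAt (s(x, y) ::ₘ E) v ↔ IsTreeAt E x ∧ IsTreeAt E y := by
  rw [Sym2.eq_swap, isTreeAt_cons_left (h ·.symm) hv, and_comm]

lemma isTreeAt_cons_away (hx : ¬ Reach E x v) (hy : ¬ Reach E y v) :
    IsTreeAt (s(x, y) ::ₘ E) v ↔ IsTreeAt E v := by
  rw [IsTreeAt, order_cons_away hx hy, size_cons_away hx hy, IsTreeAt]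

lemma noComplex_iff : NoComplex E ↔ ∀ v, size E v ≤ order E v := by
  have hsize : ∀ v, edgesIn E ((supportGraph E).connectedComponentMk v) = size E v := by
    intro v
    simp only [edgesIn, size, SimpleGraph.ConnectedComponent.eq]
  have horder : ∀ v, vertsIn E ((supportGraph E).connectedComponentMk v) = order E v := by
    intro v
    rw [vertsIn, order, ← Set.ncard_coe_finset, Nat.card_coe_set_eq]
    congr 1
    ext w
    simp
  simp only [← hsize, ← horder]
  exact SimpleGraph.ConnectedComponent.forall

lemma noComplex_zero : NoComplex (0 : Multigraph n) :=
  noComplex_iff.2 fun v => (isTreeAt_zero v).le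

lemma noComplex_cons_of_reach (h : Reach E x y) :
    NoComplex (s(x, y) ::ₘ E) ↔ NoComplex E ∧ IsTreeAt E x := by
  simp only [noComplex_iff, IsTreeAt, order_cons_of_reach h, size_cons_of_reach h]
  constructor
  · intro H
    refine ⟨fun v => (Nat.le_add_right _ _).trans (H v), ?_⟩
    simpa using H x
  · rintro ⟨H, hx⟩ v
    split_ifs with hxv
    · rwa [← order_congr hxv, ← size_congr hxv]
    · exact H v

lemma noComplex_cons_of_not_reach (h : ¬ Reach E x y) :
    NoComplex (s(x, y) ::ₘ E) ↔ NoComplex E ∧ (IsTreeAt E x ∨ IsTreeAt E y) := by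
  have hx := order_le_size_add_one E x
  have hy := order_le_size_add_one E y
  have hxy : size (s(x, y) ::ₘ E) x ≤ order (s(x, y) ::ₘ E) x ↔
      size E x + size E y + 1 ≤ order E x + order E y := by
    rw [order_cons_left h (.refl x), size_cons_left h (.refl x)]
  simp only [noComplex_iff, IsTreeAt]
  constructor
  · intro H
    have := hxy.1 (H x)
    refine ⟨fun v => ?_, by omega⟩
    by_cases hxv : Reach E x v
    · rw [← order_congr hxv, ← size_congr hxv]; omega
    by_cases hyv : Reach E y v
    · rw [← order_congr hyv, ← size_congr hyv]; omega
    rw [← order_cons_away hxv hyv, ← size_cons_away hxv hyv]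
    exact H v
  · rintro ⟨H, hT⟩ v
    have hle := hxy.2 (by have := H x; have := H y; omega)
    by_cases hv : Reach (s(x, y) ::ₘ E) x v
    · rwa [← order_congr hv, ← size_congr hv]
    have hxv : ¬ Reach E x v := fun h' => hv h'.cons
    have hyv : ¬ Reach E y v := fun h' => hv ((reach_cons_self E x y).trans h'.cons)
    rw [order_cons_away hxv hyv, size_cons_away hxv hyv]
    exact H v

lemma noComplex_cons : NoComplex (s(x, y) ::ₘ E) ↔
    NoComplex E ∧ (IsTreeAt E x ∨ IsTreeAt E y) := by
  by_cases h : Reach E x y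
  · rw [noComplex_cons_of_reach h, ← IsTreeAt.congr h, or_self]
  · exact noComplex_cons_of_not_reach h

lemma exists_cycle_edge (h : ¬ IsTreeAt E v) :
    ∃ x y E', E = s(x, y) ::ₘ E' ∧ Reach E' x y ∧ Reach E' x v := by
  induction E using Multiset.induction generalizing v with
  | empty => exact absurd (isTreeAt_zero v) h
  | cons e E ih =>
    induction e using Sym2.ind with | _ x y
    have lift : ∀ w, Reach (s(x, y) ::ₘ E) w v → ¬ IsTreeAt E w →
        ∃ x' y' E', s(x, y) ::ₘ E = s(x', y') ::ₘ E' ∧ Reach E' x' y' ∧ Reach E' x' v := by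
      intro w hw hT
      obtain ⟨a, b, E', rfl, hab, haw⟩ := ih hT
      rw [Multiset.cons_swap, reach_cons_iff_of_reach hab.cons] at hw
      exact ⟨a, b, s(x, y) ::ₘ E', Multiset.cons_swap _ _ _, hab.cons, haw.cons.trans hw⟩
    by_cases hxy : Reach E x y
    · by_cases hxv : Reach E x v
      · exact ⟨x, y, E, rfl, hxy, hxv⟩
      · exact lift v (.refl v) fun hv => h ((isTreeAt_cons_of_reach hxy).2 ⟨hv, hxv⟩)
    by_cases hv : Reach (s(x, y) ::ₘ E) x v
    · rw [← IsTreeAt.congr hv, isTreeAt_cons_left hxy (.refl x), not_and_or] at h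
      exact h.elim (lift x hv) (lift y ((reach_cons_self E x y).symm.trans hv))
    · refine lift v (.refl v) ?_
      rwa [← isTreeAt_cons_away (fun h' => hv h'.cons)
        (fun h' => hv ((reach_cons_self E x y).trans h'.cons))]

end IsTreeAt

section ComponentCount

variable {n : ℕ} {E : Multigraph n} {x y : Fin n}

lemma cc_zero (n : ℕ) : cc (0 : Multigraph n) = n := by
  have hbij : Function.Bijective (supportGraph (0 : Multigraph n)).connectedComponentMk :=
    ⟨fun _ _ h => reach_zero_iff.1 (SimpleGraph.ConnectedComponent.exact h), Quot.mk_surjective⟩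
  rw [cc, ← Nat.card_congr (Equiv.ofBijective _ hbij), Nat.card_fin]

lemma cc_cons_of_reach (h : Reach E x y) : cc (s(x, y) ::ₘ E) = cc E := by
  have : (supportGraph (s(x, y) ::ₘ E)).Reachable = (supportGraph E).Reachable := by
    funext u v
    exact propext (reach_cons_iff_of_reach h)
  simp only [cc, SimpleGraph.ConnectedComponent, this]

lemma cc_cons_of_not_reach (h : ¬ Reach E x y) : cc (s(x, y) ::ₘ E) + 1 = cc E := by
  classical
  let G := supportGraph E
  let G' := supportGraph (s(x, y) ::ₘ E)
  let f : {K : G.ConnectedComponent // K ≠ G.connectedComponentMk y} → G'.ConnectedComponent :=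
    fun K => K.1.lift G'.connectedComponentMk fun _ _ p _ =>
      SimpleGraph.ConnectedComponent.sound (Reach.cons p.reachable)
  have hf : Function.Bijective f := by
    constructor
    · rintro ⟨⟨v⟩, hv⟩ ⟨⟨w⟩, hw⟩ hvw
      have hvy : ¬ Reach E v y := fun h => hv (SimpleGraph.ConnectedComponent.sound h)
      have hyw : ¬ Reach E y w := fun h => hw (SimpleGraph.ConnectedComponent.sound h.symm)
      have hvw : Reach (s(x, y) ::ₘ E) v w := SimpleGraph.ConnectedComponent.exact hvw
      simp only [reach_cons_iff, hvy, hyw, false_and, and_false, or_false] at hvw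
      exact Subtype.ext (SimpleGraph.ConnectedComponent.sound hvw)
    · rintro ⟨v⟩
      by_cases hv : Reach E v y
      · exact ⟨⟨G.connectedComponentMk x, fun h' => h (SimpleGraph.ConnectedComponent.exact h')⟩,
          SimpleGraph.ConnectedComponent.sound ((reach_cons_self E x y).trans (Reach.cons hv.symm))⟩
      · exact ⟨⟨G.connectedComponentMk v, fun h' => hv (SimpleGraph.ConnectedComponent.exact h')⟩,
          rfl⟩
  have : Nonempty G.ConnectedComponent := ⟨G.connectedComponentMk y⟩
  have hpos : 0 < Nat.card G.ConnectedComponent := Nat.card_pos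
  have hcard := Nat.card_congr (Equiv.ofBijective f hf)
  rw [Nat.card_eq_fintype_card, Fintype.card_subtype_compl, Fintype.card_subtype_eq,
    ← Nat.card_eq_fintype_card] at hcard
  change Nat.card G'.ConnectedComponent + 1 = Nat.card G.ConnectedComponent
  omega

end ComponentCount

/-! ### Parent edges in a rooted tree -/

/-- With `E` the multigraph left after removing `e`: the edge `e` joins `u` to the component of `v`
and `u` lies outside that component. In a tree rooted at `v` this says that `e` is the edge from
`u` to its parent. -/
def IsParentEdge {n : ℕ} (E : Multigraph n) (v u : Fin n) (e : Sym2 (Fin n)) : Prop :=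
  ∃ x, e = s(x, u) ∧ Reach E x v ∧ ¬ Reach E u v

instance {n : ℕ} (E : Multigraph n) (v u : Fin n) : DecidablePred (IsParentEdge E v u) :=
  fun _ => Classical.propDecidable _

section IsParentEdge

variable {n : ℕ} {E : Multigraph n} {u v x y : Fin n}

lemma isParentEdge_mk : IsParentEdge E v u s(x, y) ↔
    (u = y ∧ Reach E x v ∧ ¬ Reach E y v) ∨ (u = x ∧ Reach E y v ∧ ¬ Reach E x v) := by
  simp only [IsParentEdge, Sym2.eq_iff]
  constructor
  · rintro ⟨w, ⟨rfl, rfl⟩ | ⟨rfl, rfl⟩, h⟩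
    exacts [.inl ⟨rfl, h⟩, .inr ⟨rfl, h⟩]
  · rintro (⟨rfl, h⟩ | ⟨rfl, h⟩)
    exacts [⟨x, .inl ⟨rfl, rfl⟩, h⟩, ⟨y, .inr ⟨rfl, rfl⟩, h⟩]

lemma IsParentEdge.mem_component_erase {e : Sym2 (Fin n)} (h : IsParentEdge E v u e) :
    u ∈ (component (e ::ₘ E) v).erase v := by
  obtain ⟨x, rfl, hx, hu⟩ := h
  simp only [Finset.mem_erase, mem_component]
  exact ⟨fun huv => hu (huv ▸ .refl _), (reach_cons_self E x u).symm.trans hx.cons⟩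

lemma not_isParentEdge_cons_of_isParentEdge_cons {e e' : Sym2 (Fin n)}
    (h : IsParentEdge (e' ::ₘ E) v u e) : ¬ IsParentEdge (e ::ₘ E) v u e' := by
  obtain ⟨x, rfl, hx, hu⟩ := h
  rintro ⟨x', rfl, hx', hu'⟩
  have hxv : ¬ Reach (s(x, u) ::ₘ E) x v := fun h => hu' ((reach_cons_self E x u).symm.trans h)
  have hxv' : ¬ Reach (s(x', u) ::ₘ E) x' v := fun h => hu ((reach_cons_self E x' u).symm.trans h)
  rw [reach_cons_iff] at hx hx' hxv hxv' hu hu'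
  tauto

lemma card_filter_isParentEdge_le_one (E : Multigraph n) (v u : Fin n) :
    (E.filter fun e => IsParentEdge (E.erase e) v u e).card ≤ 1 := by
  by_contra! hcard
  obtain ⟨k, hk⟩ := Nat.exists_eq_add_of_le' hcard
  obtain ⟨e, t, ht, htcard⟩ := Multiset.card_eq_succ_iff.1 hk
  obtain ⟨e', t', rfl, -⟩ := Multiset.card_eq_succ_iff.1 htcard
  have parent : ∀ a ∈ e ::ₘ e' ::ₘ t', IsParentEdge (E.erase a) v u a := by
    rw [ht]
    exact fun a ha => (Multiset.mem_filter.1 ha).2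
  obtain ⟨E', rfl⟩ := Multiset.le_iff_exists_add.1 (ht.trans_le (Multiset.filter_le _ E))
  have he := parent e (by simp)
  have he' := parent e' (by simp)
  rw [Multiset.cons_add, Multiset.erase_cons_head, Multiset.cons_add] at he
  rw [Multiset.cons_swap, Multiset.cons_add, Multiset.erase_cons_head, Multiset.cons_add] at he'
  exact not_isParentEdge_cons_of_isParentEdge_cons he he'

lemma filter_isParentEdge_eq_singleton (hx : Reach E x v) (hy : ¬ Reach E y v) :
    ({u | IsParentEdge E v u s(x, y)} : Finset (Fin n)) = {y} := by
  ext u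
  simp [isParentEdge_mk, hx, hy]

lemma card_filter_isParentEdge_of_mem {e : Sym2 (Fin n)} (hv : IsTreeAt E v) (he : e ∈ E) :
    ({u | IsParentEdge (E.erase e) v u e} : Finset (Fin n)).card =
      if ∀ w ∈ e, Reach E w v then 1 else 0 := by
  obtain ⟨E', rfl⟩ := Multiset.exists_cons_of_mem he
  rw [Multiset.erase_cons_head]
  induction e using Sym2.ind with | _ x y
  simp only [forall_mem_edge_reach_iff he (Sym2.mem_mk_left x y)]
  by_cases hx : Reach E' x v <;> by_cases hy : Reach E' y v
  · rw [isTreeAt_cons_of_reach (hx.trans hy.symm)] at hv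
    exact absurd hx hv.2
  · rw [filter_isParentEdge_eq_singleton hx hy, Finset.card_singleton, if_pos hx.cons]
  · rw [Sym2.eq_swap, filter_isParentEdge_eq_singleton hy hx, Finset.card_singleton,
      if_pos ((reach_cons_self E' y x).symm.trans hy.cons)]
  · simp [isParentEdge_mk, hx, hy, reach_cons_iff_away hx hy]

lemma card_filter_eq_sum_map_ite {α : Type*} (s : Multiset α) (p : α → Prop) [DecidablePred p] :
    (s.filter p).card = (s.map fun a => if p a then 1 else 0).sum := by
  induction s using Multiset.induction with
  | empty => simp
  | cons a s ih => by_cases h : p a <;> simp [h, ih, add_comm]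

lemma sum_card_filter_isParentEdge (hv : IsTreeAt E v) :
    ∑ u ∈ (component E v).erase v, (E.filter fun e => IsParentEdge (E.erase e) v u e).card =
      size E v := by
  have houtside : ∀ u ∉ (component E v).erase v,
      (E.filter fun e => IsParentEdge (E.erase e) v u e).card = 0 := fun u hu =>
    Multiset.card_eq_zero.2 <| Multiset.filter_eq_nil.2 fun e he hpar =>
      hu <| by simpa [Multiset.cons_erase he] using hpar.mem_component_erase
  rw [Finset.sum_subset (Finset.subset_univ _) fun u _ => houtside u, size]
  simp only [card_filter_eq_sum_map_ite]
  rw [Finset.sum, Multiset.sum_map_sum_map]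
  exact congrArg Multiset.sum <| Multiset.map_congr rfl fun e he => by
    rw [← card_filter_isParentEdge_of_mem hv he, Finset.card_filter, Finset.sum]

/-- No vertex has two parent edges, and the edges are exactly as many as the non-root vertices. -/
lemma card_filter_isParentEdge (hv : IsTreeAt E v) :
    ∀ u ∈ (component E v).erase v,
      (E.filter fun e => IsParentEdge (E.erase e) v u e).card = 1 := by
  rw [← Finset.sum_eq_sum_iff_of_le fun u _ => card_filter_isParentEdge_le_one E v u,
    sum_card_filter_isParentEdge hv, Finset.sum_const, smul_eq_mul, mul_one,
    Finset.card_erase_of_mem (self_mem_component E v)]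
  have := order_le_size_add_one E v
  rw [IsTreeAt] at hv
  simp only [order] at this hv
  omega

end IsParentEdge

/-! ### The uniform random multigraph -/

/-- The total mass `n ^ (2 * i) / (2 ^ i * i!)` of the compensation factors of the multigraphs with
`i` edges. -/
def totalMass (n i : ℕ) : ℝ := (n : ℝ) ^ (2 * i) / (2 ^ i * (i.factorial : ℝ))

/-- The expectation of `Φ` over the multigraph obtained by drawing `i` ordered pairs of vertices
independently and uniformly: a multigraph `E` then has probability `kappa E / totalMass n i`. -/
def mean (n i : ℕ) (Φ : Multigraph n → ℝ) : ℝ :=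
  (∑ E : Sym (Sym2 (Fin n)) i, (kappa E.1 : ℝ) * Φ E.1) / totalMass n i

section Kappa

variable {n : ℕ}

lemma kappa_nonneg (E : Multigraph n) : 0 ≤ (kappa E : ℝ) := by
  have : 0 ≤ kappa E := by unfold kappa; positivity
  exact_mod_cast this

lemma prod_inv_two_pow_count_cons (e : Sym2 (Fin n)) (E : Multigraph n) :
    ∏ v : Fin n, ((2 : ℚ) ^ (e ::ₘ E).count s(v, v))⁻¹ =
      (if e.IsDiag then 1 / 2 else 1) * ∏ v : Fin n, ((2 : ℚ) ^ E.count s(v, v))⁻¹ := by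
  have hdiag : ∏ v : Fin n, ((2 : ℚ) ^ (if s(v, v) = e then 1 else 0))⁻¹ =
      if e.IsDiag then 1 / 2 else 1 := by
    induction e using Sym2.ind with | _ x y
    by_cases hxy : x = y
    · simp [hxy, Finset.prod_inv_distrib]
    · have : ∀ v : Fin n, ¬ (v = x ∧ v = y) := fun v hv => hxy (hv.1.symm.trans hv.2)
      have hyx : ∀ v : Fin n, ¬ (v = y ∧ v = x) := fun v hv => this v hv.symm
      simp [hxy, this, hyx]
  simp only [Multiset.count_cons, pow_add, mul_inv, Finset.prod_mul_distrib]
  rw [hdiag, mul_comm]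

lemma prod_inv_factorial_count_cons {α : Type*} [DecidableEq α] (e : α) (E : Multiset α) :
    (∏ a ∈ (e ::ₘ E).toFinset, (((e ::ₘ E).count a).factorial : ℚ)⁻¹) * (E.count e + 1) =
      ∏ a ∈ E.toFinset, ((E.count a).factorial : ℚ)⁻¹ := by
  have hextend : ∏ a ∈ E.toFinset, ((E.count a).factorial : ℚ)⁻¹ =
      ∏ a ∈ (e ::ₘ E).toFinset, ((E.count a).factorial : ℚ)⁻¹ :=
    Finset.prod_subset (Multiset.toFinset_subset.2 (Multiset.subset_cons E e)) fun a _ ha => by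
      simp [Multiset.count_eq_zero_of_notMem (mt Multiset.mem_toFinset.2 ha)]
  have hfactor : ∀ a, (((e ::ₘ E).count a).factorial : ℚ)⁻¹ =
      ((E.count a).factorial : ℚ)⁻¹ * if a = e then ((E.count a : ℚ) + 1)⁻¹ else 1 := by
    intro a
    by_cases h : a = e <;> simp [h, Nat.factorial_succ, mul_comm]
  have hmem : e ∈ (e ::ₘ E).toFinset := Multiset.mem_toFinset.2 (Multiset.mem_cons_self e E)
  simp only [hfactor, Finset.prod_mul_distrib, Finset.prod_ite_eq', if_pos hmem]
  rw [inv_mul_cancel_right₀ (by positivity), hextend]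

lemma kappa_cons (e : Sym2 (Fin n)) (E : Multigraph n) :
    kappa (e ::ₘ E) * (E.count e + 1) = (if e.IsDiag then 1 / 2 else 1) * kappa E := by
  rw [kappa, mul_assoc, prod_inv_factorial_count_cons, prod_inv_two_pow_count_cons, kappa,
    mul_assoc]

lemma sum_sym2_mul_ite_isDiag {α : Type*} [Fintype α] [DecidableEq α] (f : Sym2 α → ℝ) :
    ∑ e, (if e.IsDiag then 1 / 2 else 1) * f e = (1 / 2) * ∑ x, ∑ y, f s(x, y) := by
  have hfiber : ∀ e : Sym2 α, ∑ p : α × α with s(p.1, p.2) = e, f s(p.1, p.2) =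
      2 * ((if e.IsDiag then 1 / 2 else 1) * f e) := by
    intro e
    induction e using Sym2.ind with | _ x y
    have hpairs : ({p : α × α | s(p.1, p.2) = s(x, y)} : Finset (α × α)) = {(x, y), (y, x)} := by
      ext ⟨a, b⟩; simp
    rw [hpairs]
    by_cases hxy : x = y
    · subst hxy; simp
    · rw [Finset.sum_pair (by simp [hxy]), Sym2.eq_swap (a := y)]
      simp [hxy, two_mul]
  have h := Finset.sum_fiberwise (s := (Finset.univ : Finset (α × α)))
    (g := fun p => s(p.1, p.2)) (f := fun p => f s(p.1, p.2))
  rw [Fintype.sum_prod_type] at h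
  rw [← h, Finset.sum_congr rfl fun e _ => hfiber e, ← Finset.mul_sum]
  ring

lemma sum_kappa_mul_sum_edges (i : ℕ) (Φ : Multigraph n → Sym2 (Fin n) → ℝ) :
    ∑ E : Sym (Sym2 (Fin n)) (i + 1),
        (kappa E.1 : ℝ) * (E.1.map fun e => Φ (E.1.erase e) e).sum =
      1 / 2 * ∑ E : Sym (Sym2 (Fin n)) i, (kappa E.1 : ℝ) * ∑ x, ∑ y, Φ E.1 s(x, y) := by
  have hcount : ∀ E : Sym (Sym2 (Fin n)) (i + 1),
      (kappa E.1 : ℝ) * (E.1.map fun e => Φ (E.1.erase e) e).sum =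
        ∑ e : Sym2 (Fin n), (kappa E.1 : ℝ) * (E.1.count e * Φ (E.1.erase e) e) := by
    intro E
    rw [Finset.sum_multiset_map_count, Finset.mul_sum]
    simp only [nsmul_eq_mul]
    refine Finset.sum_subset (Finset.subset_univ _) fun e _ he => ?_
    rw [Multiset.count_eq_zero_of_notMem (mt Multiset.mem_toFinset.2 he)]
    simp
  have hpairs : ∀ E : Sym (Sym2 (Fin n)) i,
      1 / 2 * ((kappa E.1 : ℝ) * ∑ x, ∑ y, Φ E.1 s(x, y)) =
        ∑ e : Sym2 (Fin n), (kappa E.1 : ℝ) * ((if e.IsDiag then 1 / 2 else 1) * Φ E.1 e) := by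
    intro E
    rw [← Finset.mul_sum, sum_sym2_mul_ite_isDiag]
    ring
  rw [Finset.mul_sum]
  simp only [hcount, hpairs]
  rw [Finset.sum_comm, Finset.sum_comm (s := (Finset.univ : Finset (Sym (Sym2 (Fin n)) i)))]
  refine Finset.sum_congr rfl fun e _ => (Fintype.sum_of_injective (fun E => e ::ₛ E)
    (fun _ _ h => (Sym.cons_inj_right e _ _).1 h) _ _ (fun E hE => ?_) fun E => ?_).symm
  · have he : e ∉ E.1 := fun h => hE ⟨E.erase e h, Sym.cons_erase h⟩
    rw [Multiset.count_eq_zero_of_notMem he]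
    simp
  · have hkappa : ((kappa (e ::ₘ E.1) : ℚ) : ℝ) * ((E.1.count e : ℝ) + 1) =
        (if e.IsDiag then 1 / 2 else 1) * (kappa E.1 : ℝ) := by
      have := congrArg (Rat.cast : ℚ → ℝ) (kappa_cons e E.1)
      push_cast at this
      rw [this]
      split_ifs <;> simp
    change _ = (kappa (e ::ₘ E.1) : ℝ) * ((e ::ₘ E.1).count e * Φ ((e ::ₘ E.1).erase e) e)
    rw [Multiset.erase_cons_head, Multiset.count_cons_self]
    push_cast
    linear_combination -(Φ E.1 e) * hkappa

end Kappa

section Mean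

variable {n i : ℕ} {Φ Ψ : Multigraph n → ℝ}

lemma totalMass_nonneg (n i : ℕ) : 0 ≤ totalMass n i := by unfold totalMass; positivity

lemma totalMass_ne_zero {n : ℕ} (hn : n ≠ 0) (i : ℕ) : totalMass n i ≠ 0 := by
  unfold totalMass
  positivity

lemma mean_add (Φ Ψ : Multigraph n → ℝ) :
    mean n i (fun E => Φ E + Ψ E) = mean n i Φ + mean n i Ψ := by
  simp only [mean, mul_add, Finset.sum_add_distrib, add_div]

lemma mean_const_mul (a : ℝ) (Φ : Multigraph n → ℝ) :
    mean n i (fun E => a * Φ E) = a * mean n i Φ := by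
  simp only [mean, mul_left_comm _ a, ← Finset.mul_sum, mul_div_assoc]

lemma mean_mono (h : ∀ E, E.card = i → Φ E ≤ Ψ E) : mean n i Φ ≤ mean n i Ψ :=
  div_le_div_of_nonneg_right (Finset.sum_le_sum fun E _ =>
    mul_le_mul_of_nonneg_left (h _ E.2) (kappa_nonneg _)) (totalMass_nonneg n i)

lemma mean_congr (h : ∀ E, E.card = i → Φ E = Ψ E) : mean n i Φ = mean n i Ψ :=
  (mean_mono fun E hE => (h E hE).le).antisymm (mean_mono fun E hE => (h E hE).ge)

lemma mean_zero (Φ : Multigraph n → ℝ) : mean n 0 Φ = Φ 0 := by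
  rw [mean, Fintype.sum_subsingleton _ Sym.nil]
  change (kappa (0 : Multigraph n) : ℝ) * Φ 0 / totalMass n 0 = _
  simp [kappa, totalMass]

lemma mean_sum_edges (i : ℕ) (Φ : Multigraph n → Sym2 (Fin n) → ℝ) :
    mean n (i + 1) (fun E => (E.map fun e => Φ (E.erase e) e).sum) =
      (i + 1) / n ^ 2 * mean n i fun E => ∑ x, ∑ y, Φ E s(x, y) := by
  rw [mean, sum_kappa_mul_sum_edges, mean, totalMass, totalMass, Nat.factorial_succ]
  rcases eq_or_ne (n : ℝ) 0 with hn | hn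
  · simp [hn]
  have hfac : (i.factorial : ℝ) ≠ 0 := by positivity
  push_cast
  field_simp
  ring

lemma mean_succ (i : ℕ) (Ψ : Multigraph n → ℝ) :
    mean n (i + 1) Ψ = 1 / n ^ 2 * mean n i fun E => ∑ x, ∑ y, Ψ (s(x, y) ::ₘ E) := by
  have hedges : mean n (i + 1) (fun E => (E.map fun e => Ψ (e ::ₘ E.erase e)).sum) =
      (i + 1) * mean n (i + 1) Ψ := by
    rw [← mean_const_mul]
    refine mean_congr fun E hE => ?_
    rw [Multiset.map_congr (g := fun _ => Ψ E) rfl fun e he => by rw [Multiset.cons_erase he]]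
    simp [hE, add_mul]
    ring
  rw [mean_sum_edges i fun E e => Ψ (e ::ₘ E)] at hedges
  refine mul_left_cancel₀ (by positivity : (i + 1 : ℝ) ≠ 0) ?_
  rw [← hedges]
  ring

end Mean

/-! ### Averages over multigraphs without complex components -/

/-- The vertices whose component is a tree. -/
def treeVerts {n : ℕ} (E : Multigraph n) : Finset (Fin n) := {v | IsTreeAt E v}

/-- The vertices lying in a tree component other than the component of `v`. -/
def otherTrees {n : ℕ} (E : Multigraph n) (v : Fin n) : Finset (Fin n) :=
  {u | ¬ Reach E u v ∧ IsTreeAt E u}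

/-- The expectation of `Φ` restricted to multigraphs without complex components. -/
def ncMean (n i : ℕ) (Φ : Multigraph n → ℝ) : ℝ :=
  mean n i fun E => if NoComplex E then Φ E else 0

/-- The expectation, over multigraphs without complex components, of the sum of `F` over the
vertices of the tree components. -/
def treeMean (n i : ℕ) (F : Multigraph n → Fin n → ℝ) : ℝ :=
  ncMean n i fun E => ∑ v ∈ treeVerts E, F E v

section NcMean

variable {n i : ℕ} {Φ Ψ : Multigraph n → ℝ} {F G : Multigraph n → Fin n → ℝ}

@[simp] lemma mem_treeVerts {E : Multigraph n} {v : Fin n} : v ∈ treeVerts E ↔ IsTreeAt E v := by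
  simp [treeVerts]

@[simp] lemma mem_otherTrees {E : Multigraph n} {u v : Fin n} :
    u ∈ otherTrees E v ↔ ¬ Reach E u v ∧ IsTreeAt E u := by
  simp [otherTrees]

lemma ncMean_add (Φ Ψ : Multigraph n → ℝ) :
    ncMean n i (fun E => Φ E + Ψ E) = ncMean n i Φ + ncMean n i Ψ := by
  rw [ncMean, ncMean, ncMean, ← mean_add]
  congr! 2 with E
  split_ifs <;> simp

lemma ncMean_const_mul (a : ℝ) (Φ : Multigraph n → ℝ) :
    ncMean n i (fun E => a * Φ E) = a * ncMean n i Φ := by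
  simp only [ncMean, ← mean_const_mul, mul_ite, mul_zero]

lemma ncMean_sub (Φ Ψ : Multigraph n → ℝ) :
    ncMean n i (fun E => Φ E - Ψ E) = ncMean n i Φ - ncMean n i Ψ := by
  rw [eq_sub_iff_add_eq, ← ncMean_add]
  simp

lemma ncMean_mono (h : ∀ E, NoComplex E → E.card = i → Φ E ≤ Ψ E) :
    ncMean n i Φ ≤ ncMean n i Ψ := by
  refine mean_mono fun E hE => ?_
  split_ifs with hnc
  exacts [h E hnc hE, le_rfl]

lemma ncMean_congr (h : ∀ E, NoComplex E → E.card = i → Φ E = Ψ E) :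
    ncMean n i Φ = ncMean n i Ψ :=
  (ncMean_mono fun E hnc hE => (h E hnc hE).le).antisymm
    (ncMean_mono fun E hnc hE => (h E hnc hE).ge)

lemma ncMean_nonneg (h : ∀ E, NoComplex E → 0 ≤ Φ E) : 0 ≤ ncMean n i Φ := by
  simpa using (ncMean_const_mul (i := i) 0 Φ).ge.trans
    (ncMean_mono fun E hE _ => (zero_mul (Φ E)).trans_le (h E hE))

lemma abs_ncMean_le (Φ : Multigraph n → ℝ) : |ncMean n i Φ| ≤ ncMean n i fun E => |Φ E| := by
  refine abs_le.2 ⟨?_, ncMean_mono fun E _ _ => le_abs_self _⟩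
  rw [neg_eq_neg_one_mul, ← ncMean_const_mul]
  exact ncMean_mono fun E _ _ => (neg_one_mul |Φ E|).trans_le (neg_abs_le _)

lemma ncMean_zero (Φ : Multigraph n → ℝ) : ncMean n 0 Φ = Φ 0 := by
  rw [ncMean, mean_zero, if_pos noComplex_zero]

lemma ncMean_succ (i : ℕ) (Ψ : Multigraph n → ℝ) :
    ncMean n (i + 1) Ψ = 1 / n ^ 2 * ncMean n i fun E =>
      ∑ x, ∑ y, if IsTreeAt E x ∨ IsTreeAt E y then Ψ (s(x, y) ::ₘ E) else 0 := by
  rw [ncMean, mean_succ, ncMean]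
  congr! 3 with E
  simp only [noComplex_cons]
  by_cases h : NoComplex E <;> simp [h]

lemma treeMean_add (F G : Multigraph n → Fin n → ℝ) :
    treeMean n i (fun E v => F E v + G E v) = treeMean n i F + treeMean n i G := by
  simp only [treeMean, Finset.sum_add_distrib, ncMean_add]

lemma treeMean_const_mul (a : ℝ) (F : Multigraph n → Fin n → ℝ) :
    treeMean n i (fun E v => a * F E v) = a * treeMean n i F := by
  simp only [treeMean, ← Finset.mul_sum, ncMean_const_mul]

lemma treeMean_sum {κ : Type*} (s : Finset κ) (F : κ → Multigraph n → Fin n → ℝ) :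
    treeMean n i (fun E v => ∑ j ∈ s, F j E v) = ∑ j ∈ s, treeMean n i (F j) := by
  classical
  induction s using Finset.induction_on with
  | empty => simpa using treeMean_const_mul (i := i) 0 fun (_ : Multigraph n) _ => 0
  | insert a s ha ih => simp only [Finset.sum_insert ha, treeMean_add, ih]

lemma treeMean_mono (h : ∀ E v, NoComplex E → IsTreeAt E v → F E v ≤ G E v) :
    treeMean n i F ≤ treeMean n i G :=
  ncMean_mono fun E hE _ => Finset.sum_le_sum fun v hv => h E v hE (mem_treeVerts.1 hv)

lemma treeMean_congr (h : ∀ E v, NoComplex E → IsTreeAt E v → F E v = G E v) :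
    treeMean n i F = treeMean n i G :=
  (treeMean_mono fun E v hE hv => (h E v hE hv).le).antisymm
    (treeMean_mono fun E v hE hv => (h E v hE hv).ge)

lemma treeMean_nonneg (h : ∀ E v, NoComplex E → IsTreeAt E v → 0 ≤ F E v) :
    0 ≤ treeMean n i F :=
  ncMean_nonneg fun E hE => Finset.sum_nonneg fun v hv => h E v hE (mem_treeVerts.1 hv)

lemma abs_treeMean_le (h : ∀ E v, NoComplex E → IsTreeAt E v → |F E v| ≤ G E v) :
    |treeMean n i F| ≤ treeMean n i G :=
  (abs_ncMean_le _).trans <| ncMean_mono fun E hE _ => (Finset.abs_sum_le_sum_abs _ _).trans <|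
    Finset.sum_le_sum fun v hv => h E v hE (mem_treeVerts.1 hv)

end NcMean

section Bridge

variable {n : ℕ} {E : Multigraph n} {v x y : Fin n}

lemma sum_erase_component_eq (hv : IsTreeAt E v) (F : Fin n → ℝ) :
    ∑ u ∈ (component E v).erase v, F u =
      (E.map fun e => ∑ u, if IsParentEdge (E.erase e) v u e then F u else 0).sum := by
  have hcard : ∀ u, (E.map fun e => if IsParentEdge (E.erase e) v u e then F u else 0).sum =
      (E.filter fun e => IsParentEdge (E.erase e) v u e).card * F u := by
    intro u
    rw [card_filter_eq_sum_map_ite, Nat.cast_multiset_sum, Multiset.map_map,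
      ← Multiset.sum_map_mul_right]
    simp
  have hswap : (E.map fun e => ∑ u, if IsParentEdge (E.erase e) v u e then F u else 0).sum =
      ∑ u, (E.map fun e => if IsParentEdge (E.erase e) v u e then F u else 0).sum := by
    simp only [Finset.sum]
    exact Multiset.sum_map_sum_map _ _
  rw [hswap, ← Finset.sum_subset (Finset.subset_univ ((component E v).erase v))]
  · refine Finset.sum_congr rfl fun u hu => ?_
    rw [hcard, card_filter_isParentEdge hv u hu, Nat.cast_one, one_mul]
  · intro u _ hu
    rw [hcard, Multiset.card_eq_zero.2, Nat.cast_zero, zero_mul]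
    exact Multiset.filter_eq_nil.2 fun e he hpar =>
      hu <| by simpa [Multiset.cons_erase he] using hpar.mem_component_erase

lemma noComplex_and_isTreeAt_cons_iff (hx : Reach E x v) (hy : ¬ Reach E y v) :
    NoComplex (s(x, y) ::ₘ E) ∧ IsTreeAt (s(x, y) ::ₘ E) v ↔
      NoComplex E ∧ IsTreeAt E v ∧ IsTreeAt E y := by
  have hxy : ¬ Reach E x y := fun h => hy (h.symm.trans hx)
  rw [noComplex_cons, isTreeAt_cons_left hxy hx, IsTreeAt.congr hx]
  tauto

lemma sum_pairs_isParentEdge (E : Multigraph n) (v : Fin n) (F : Sym2 (Fin n) → Fin n → ℝ) :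
    ∑ x, ∑ y, ∑ u, (if IsParentEdge E v u s(x, y) then F s(x, y) u else 0) =
      2 * ∑ x ∈ component E v, ∑ u with ¬ Reach E u v, F s(x, u) u := by
  have hsplit : ∀ x y, ∑ u, (if IsParentEdge E v u s(x, y) then F s(x, y) u else 0) =
      (if Reach E x v ∧ ¬ Reach E y v then F s(x, y) y else 0) +
        if Reach E y v ∧ ¬ Reach E x v then F s(y, x) x else 0 := by
    intro x y
    simp only [isParentEdge_mk]
    by_cases hx : Reach E x v <;> by_cases hy : Reach E y v <;>
      simp [hx, hy, Sym2.eq_swap (a := y)]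
  simp only [hsplit, Finset.sum_add_distrib]
  rw [Finset.sum_comm (f := fun x y => if Reach E y v ∧ ¬ Reach E x v then F s(y, x) x else 0),
    ← two_mul]
  simp only [component, Finset.sum_filter, ite_and]
  congr! 3 with x
  split_ifs <;> simp

lemma sum_treeVerts_eq_sum_map (E : Multigraph n) (F : Fin n → Fin n → ℝ) :
    ∑ v ∈ treeVerts E, ∑ u ∈ (component E v).erase v, F v u =
      (E.map fun e => ∑ v ∈ treeVerts E, ∑ u,
        if IsParentEdge (E.erase e) v u e then F v u else 0).sum := by
  rw [Finset.sum_congr rfl fun v hv => sum_erase_component_eq (mem_treeVerts.1 hv) (F v)]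
  simp only [Finset.sum]
  exact (Multiset.sum_map_sum_map _ _).symm

lemma sum_pairs_treeVerts_cons (E : Multigraph n) (G : Multigraph n → Fin n → Fin n → ℝ) :
    (∑ x, ∑ y, if NoComplex (s(x, y) ::ₘ E) then ∑ v ∈ treeVerts (s(x, y) ::ₘ E), ∑ u,
        (if IsParentEdge E v u s(x, y) then G (s(x, y) ::ₘ E) v u else 0) else 0) =
      2 * if NoComplex E then ∑ v ∈ treeVerts E, ∑ x ∈ component E v, ∑ u ∈ otherTrees E v,
        G (s(x, u) ::ₘ E) v u else 0 := by
  let H (E' : Multigraph n) (v u : Fin n) : ℝ :=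
    if NoComplex E' ∧ IsTreeAt E' v then G E' v u else 0
  have hH : ∀ v, ∀ x ∈ component E v, ∀ u, ¬ Reach E u v → H (s(x, u) ::ₘ E) v u =
      if NoComplex E then if IsTreeAt E v then if IsTreeAt E u then G (s(x, u) ::ₘ E) v u
        else 0 else 0 else 0 := by
    intro v x hx u hu
    simp only [H, noComplex_and_isTreeAt_cons_iff (mem_component.1 hx) hu]
    simp only [ite_and]
  calc _ = ∑ x, ∑ y, ∑ v, ∑ u,
        (if IsParentEdge E v u s(x, y) then H (s(x, y) ::ₘ E) v u else 0) := by
        congr! 4 with x _ y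
        by_cases hE : NoComplex (s(x, y) ::ₘ E)
        · simp only [hE, if_true, treeVerts, Finset.sum_filter, H, true_and]
          congr! 1 with v
          split_ifs <;> simp
        · simp [H, hE]
    _ = ∑ v, ∑ x, ∑ y, ∑ u,
        (if IsParentEdge E v u s(x, y) then H (s(x, y) ::ₘ E) v u else 0) := by
        rw [Finset.sum_congr rfl fun x _ => Finset.sum_comm, Finset.sum_comm]
    _ = 2 * ∑ v, ∑ x ∈ component E v, ∑ u with ¬ Reach E u v, H (s(x, u) ::ₘ E) v u := by
        rw [Finset.mul_sum]
        exact Finset.sum_congr rfl fun v _ =>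
          sum_pairs_isParentEdge E v fun e u => H (e ::ₘ E) v u
    _ = _ := by
        rw [Finset.sum_congr rfl fun v _ => Finset.sum_congr rfl fun x hx =>
          Finset.sum_congr rfl fun u hu => hH v x hx u (Finset.mem_filter.1 hu).2]
        simp only [treeVerts, otherTrees, ← Finset.filter_filter,
          Finset.sum_filter (IsTreeAt E)]
        split_ifs <;> simp

/-- Reveal the edge joining `u` to its parent in the tree rooted at `v`; removing it splits the
tree in two. -/
lemma treeMean_sum_erase_component (i : ℕ) (G : Multigraph n → Fin n → Fin n → ℝ) :
    treeMean n (i + 1) (fun E v => ∑ u ∈ (component E v).erase v, G E v u) =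
      2 * (i + 1) / n ^ 2 * treeMean n i fun E v =>
        ∑ x ∈ component E v, ∑ u ∈ otherTrees E v, G (s(x, u) ::ₘ E) v u := by
  have hreveal : ∀ E : Multigraph n,
      (if NoComplex E then ∑ v ∈ treeVerts E, ∑ u ∈ (component E v).erase v, G E v u else 0) =
        (E.map fun e => if NoComplex (e ::ₘ E.erase e) then ∑ v ∈ treeVerts (e ::ₘ E.erase e), ∑ u,
          (if IsParentEdge (E.erase e) v u e then G (e ::ₘ E.erase e) v u else 0) else 0).sum := by
    intro E
    rw [Multiset.map_congr rfl fun e he => by rw [Multiset.cons_erase he]]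
    split_ifs
    exacts [sum_treeVerts_eq_sum_map E (G E), by simp]
  rw [treeMean, ncMean, funext hreveal, mean_sum_edges i fun E e => if NoComplex (e ::ₘ E) then
    ∑ v ∈ treeVerts (e ::ₘ E), ∑ u,
      (if IsParentEdge E v u e then G (e ::ₘ E) v u else 0) else 0,
    funext fun E => sum_pairs_treeVerts_cons E G, mean_const_mul, treeMean, ncMean]
  ring

end Bridge

/-! ### Coloured multigraphs -/

section ColorProd

variable {n q : ℕ} {R : Matrix (Fin q) (Fin q) ℝ} {E : Multigraph n} {u v x y : Fin n}

/-- The weight of a colouring: the product of the entries of `R` over the edges of `E`. -/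
def colorProd (R : Matrix (Fin q) (Fin q) ℝ) (E : Multigraph n) (c : Fin n → Fin q) : ℝ :=
  (E.map fun e => R (c e.inf) (c e.sup)).prod

/-- Apply `π` to the colours of the vertices in the component of `u`. -/
def recolor (E : Multigraph n) (u : Fin n) (π : Equiv.Perm (Fin q)) :
    Equiv.Perm (Fin n → Fin q) :=
  Equiv.piCongrRight fun v => if Reach E v u then π else 1

lemma recolor_of_reach (π : Equiv.Perm (Fin q)) (c : Fin n → Fin q) (h : Reach E v u) :
    recolor E u π c v = π (c v) := by
  simp [recolor, h]

lemma recolor_of_not_reach (π : Equiv.Perm (Fin q)) (c : Fin n → Fin q) (h : ¬ Reach E v u) :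
    recolor E u π c v = c v := by
  simp [recolor, h]

lemma apply_inf_sup (hR : R.IsSymm) (c : Fin n → Fin q) (x y : Fin n) :
    R (c s(x, y).inf) (c s(x, y).sup) = R (c x) (c y) := by
  rw [Sym2.inf_mk, Sym2.sup_mk]
  rcases le_total x y with h | h
  · rw [inf_eq_left.2 h, sup_eq_right.2 h]
  · rw [inf_eq_right.2 h, sup_eq_left.2 h, hR.apply]

lemma colorProd_cons (hR : R.IsSymm) (x y : Fin n) (E : Multigraph n) (c : Fin n → Fin q) :
    colorProd R (s(x, y) ::ₘ E) c = R (c x) (c y) * colorProd R E c := by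
  rw [colorProd, Multiset.map_cons, Multiset.prod_cons, apply_inf_sup hR, colorProd]

lemma colorProd_nonneg (h0 : ∀ i j, 0 ≤ R i j) (E : Multigraph n) (c : Fin n → Fin q) :
    0 ≤ colorProd R E c := by
  refine Multiset.prod_nonneg fun a ha => ?_
  obtain ⟨e, -, rfl⟩ := Multiset.mem_map.1 ha
  exact h0 _ _

lemma weight_eq_mul_colorProd (R : Matrix (Fin q) (Fin q) ℝ) (σ : ℝ) (E : Multigraph n)
    (c : Fin n → Fin q) : weight R σ E c = kappa E * σ ^ cc E * colorProd R E c := by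
  rw [weight, colorProd, Finset.prod_multiset_map_count]

lemma colorProd_recolor (hR : R.IsSymm) {π : Equiv.Perm (Fin q)}
    (hπ : ∀ a b, R (π a) (π b) = R a b) (E : Multigraph n) (u : Fin n) (c : Fin n → Fin q) :
    colorProd R E (recolor E u π c) = colorProd R E c := by
  refine congrArg Multiset.prod (Multiset.map_congr rfl fun e he => ?_)
  induction e using Sym2.ind with | _ x y
  rw [apply_inf_sup hR, apply_inf_sup hR]
  have hxy : Reach E x y := reach_of_mem he
  by_cases hx : Reach E x u
  · rw [recolor_of_reach π c hx, recolor_of_reach π c (hxy.symm.trans hx), hπ]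
  · rw [recolor_of_not_reach π c hx, recolor_of_not_reach π c fun hy => hx (hxy.trans hy)]

/-- Conditionally on the colours outside its component, the colour of `u` is uniform: recolour the
component by automorphisms of `R`. -/
lemma sum_mul_colorProd (hR : IsVertexTransitive R) (E : Multigraph n) (u : Fin n)
    {f : (Fin n → Fin q) → Fin q → ℝ}
    (hf : ∀ c c', (∀ v, ¬ Reach E v u → c v = c' v) → f c = f c') :
    q * ∑ c, f c (c u) * colorProd R E c = ∑ c, (∑ b, f c b) * colorProd R E c := by
  have hcolor : ∀ a b d, ∑ c, (if c u = a then f c d * colorProd R E c else 0) =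
      ∑ c, (if c u = b then f c d * colorProd R E c else 0) := by
    intro a b d
    obtain ⟨π, rfl, hπ⟩ := hR.2.2 a b
    refine Fintype.sum_equiv (recolor E u π) _ _ fun c => ?_
    rw [colorProd_recolor hR.1 hπ, recolor_of_reach π c (.refl u),
      hf _ c fun v hv => recolor_of_not_reach π c hv]
    simp only [π.injective.eq_iff]
  have hsplit : ∀ f' : (Fin n → Fin q) → ℝ,
      ∑ c, f' c = ∑ a, ∑ c, if c u = a then f' c else 0 := by
    intro f'
    rw [Finset.sum_comm]
    simp
  calc q * ∑ c, f c (c u) * colorProd R E c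
      = ∑ b, q * ∑ c, (if c u = b then f c b * colorProd R E c else 0) := by
        rw [hsplit, Finset.mul_sum]
        congr! 5 with b _ c _ hb
        exact hb.symm ▸ rfl
    _ = ∑ b, ∑ a, ∑ c, (if c u = a then f c b * colorProd R E c else 0) := by
        refine Finset.sum_congr rfl fun b _ => ?_
        rw [Finset.sum_congr rfl fun a _ => hcolor a b b]
        simp
    _ = ∑ c, (∑ b, f c b) * colorProd R E c := by
        simp only [← hsplit, Finset.sum_mul]
        exact Finset.sum_comm

end ColorProd

section NormWeight

variable {n q : ℕ} {R : Matrix (Fin q) (Fin q) ℝ} {σ : ℝ} {E : Multigraph n} {u v x y : Fin n}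

/-- The normalisation `(q σ) ^ (|E| - n) * σ ^ cc E`, under which the total weight of the
colourings of a forest is `1`. -/
def normFactor (q : ℕ) (σ : ℝ) (E : Multigraph n) : ℝ :=
  (q * σ) ^ E.card * σ ^ cc E / (q * σ) ^ n

/-- The normalised total weight of the colourings of `E`. -/
def normWeight (R : Matrix (Fin q) (Fin q) ℝ) (σ : ℝ) (E : Multigraph n) : ℝ :=
  normFactor q σ E * ∑ c, colorProd R E c

/-- The normalised correlation of the observable `φ` at the colours of `u` and `v`. -/
def colorCorr (R : Matrix (Fin q) (Fin q) ℝ) (σ : ℝ) (φ : Fin q → ℝ) (E : Multigraph n)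
    (v u : Fin n) : ℝ :=
  q * (normFactor q σ E * ∑ c, φ (c v) * φ (c u) * colorProd R E c)

lemma normFactor_nonneg (hσ : 0 ≤ σ) (E : Multigraph n) : 0 ≤ normFactor q σ E := by
  unfold normFactor; positivity

lemma normFactor_cons_of_reach (h : Reach E x y) :
    normFactor q σ (s(x, y) ::ₘ E) = q * σ * normFactor q σ E := by
  rw [normFactor, normFactor, cc_cons_of_reach h, Multiset.card_cons]
  ring

lemma normFactor_cons_of_not_reach (h : ¬ Reach E x y) :
    normFactor q σ (s(x, y) ::ₘ E) = q * normFactor q σ E := by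
  rw [normFactor, normFactor, ← cc_cons_of_not_reach h, Multiset.card_cons]
  ring

lemma normWeight_zero (hq : q ≠ 0) (hσ : σ ≠ 0) : normWeight R σ (0 : Multigraph n) = 1 := by
  simp [normWeight, normFactor, cc_zero, colorProd, mul_pow]
  field_simp

lemma normWeight_nonneg (hR : ∀ i j, 0 ≤ R i j) (hσ : 0 ≤ σ) (E : Multigraph n) :
    0 ≤ normWeight R σ E :=
  mul_nonneg (normFactor_nonneg hσ E) (Finset.sum_nonneg fun c _ => colorProd_nonneg hR E c)

lemma normWeight_cons_of_not_reach (hR : IsVertexTransitive R) (hrow : ∀ i, ∑ j, R i j = 1)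
    (h : ¬ Reach E x y) : normWeight R σ (s(x, y) ::ₘ E) = normWeight R σ E := by
  have hunif := sum_mul_colorProd hR E y (f := fun c b => R (c x) b) fun c c' hc => by rw [hc x h]
  simp only [hrow, one_mul] at hunif
  rw [normWeight, normWeight, normFactor_cons_of_not_reach h, ← hunif]
  simp only [colorProd_cons hR.1]
  ring

lemma normWeight_cons_le_of_reach (hR : R.IsSymm) (h0 : ∀ i j, 0 ≤ R i j)
    (hrow : ∀ i, ∑ j, R i j = 1) (hσ : 0 ≤ σ) (h : Reach E x y) :
    normWeight R σ (s(x, y) ::ₘ E) ≤ q * σ * normWeight R σ E := by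
  rw [normWeight, normWeight, normFactor_cons_of_reach h, mul_assoc (q * σ : ℝ)]
  refine mul_le_mul_of_nonneg_left (mul_le_mul_of_nonneg_left (Finset.sum_le_sum fun c _ => ?_)
    (normFactor_nonneg hσ E)) (by positivity)
  rw [colorProd_cons hR]
  exact mul_le_of_le_one_left (colorProd_nonneg h0 E c)
    (Matrix.le_one_of_mem_rowStochastic (Matrix.mem_rowStochastic_iff_sum.2 ⟨h0, hrow⟩))

lemma normWeight_cons_of_reach {ι : Type*} [Fintype ι] {lam : ι → ℝ} {φ : ι → Fin q → ℝ}
    (hR : R.IsSymm) (hspec : ∀ a b, R a b = ∑ i, lam i * (φ i a * φ i b)) (h : Reach E x y) :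
    normWeight R σ (s(x, y) ::ₘ E) = σ * ∑ i, lam i * colorCorr R σ (φ i) E x y := by
  have hexpand : ∑ c, R (c x) (c y) * colorProd R E c =
      ∑ i, lam i * ∑ c, φ i (c x) * φ i (c y) * colorProd R E c := by
    simp only [Finset.mul_sum]
    rw [Finset.sum_comm]
    simp only [hspec (_) (_), Finset.sum_mul, mul_assoc]
  simp only [normWeight, normFactor_cons_of_reach h, colorProd_cons hR, colorCorr]
  rw [hexpand, Finset.mul_sum, Finset.mul_sum]
  exact Finset.sum_congr rfl fun i _ => by ring

lemma colorCorr_self {φ : Fin q → ℝ} (hR : IsVertexTransitive R) (hφ : ∑ a, φ a ^ 2 = 1)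
    (E : Multigraph n) (v : Fin n) : colorCorr R σ φ E v v = normWeight R σ E := by
  have hunif := sum_mul_colorProd hR E v (f := fun _ b => φ b ^ 2) fun _ _ _ => rfl
  simp only [hφ, one_mul] at hunif
  rw [colorCorr, normWeight, ← hunif]
  simp only [sq]
  ring

lemma colorCorr_cons {φ : Fin q → ℝ} {lam : ℝ} (hR : IsVertexTransitive R)
    (hφ : ∀ a, ∑ b, R a b * φ b = lam * φ a) (hx : Reach E x v) (hu : ¬ Reach E u v) :
    colorCorr R σ φ (s(x, u) ::ₘ E) v u = lam * colorCorr R σ φ E v x := by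
  have hxu : ¬ Reach E x u := fun h => hu (h.symm.trans hx)
  have hunif := sum_mul_colorProd hR E u (f := fun c b => φ (c v) * (R (c x) b * φ b))
    fun c c' hc => by rw [hc x hxu, hc v fun h => hu h.symm]
  simp only [← Finset.mul_sum, hφ] at hunif
  have hright : ∑ c, φ (c v) * (lam * φ (c x)) * colorProd R E c =
      lam * ∑ c, φ (c v) * φ (c x) * colorProd R E c := by
    rw [Finset.mul_sum]
    exact Finset.sum_congr rfl fun c _ => by ring
  have hleft : ∑ c, φ (c v) * φ (c u) * colorProd R (s(x, u) ::ₘ E) c =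
      ∑ c, φ (c v) * (R (c x) (c u) * φ (c u)) * colorProd R E c :=
    Finset.sum_congr rfl fun c _ => by rw [colorProd_cons hR.1]; ring
  rw [colorCorr, colorCorr, normFactor_cons_of_not_reach hxu, hleft]
  rw [hright] at hunif
  linear_combination (q * normFactor q σ E) * hunif

lemma abs_colorCorr_le {φ : Fin q → ℝ} (h0 : ∀ i j, 0 ≤ R i j) (hσ : 0 ≤ σ)
    (hφ : ∀ a, |φ a| ≤ 1) (E : Multigraph n) (v u : Fin n) :
    |colorCorr R σ φ E v u| ≤ q * normWeight R σ E := by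
  rw [colorCorr, normWeight, abs_mul, abs_mul, abs_of_nonneg (normFactor_nonneg hσ E),
    Nat.abs_cast]
  refine mul_le_mul_of_nonneg_left (mul_le_mul_of_nonneg_left
    ((Finset.abs_sum_le_sum_abs _ _).trans (Finset.sum_le_sum fun c _ => ?_))
    (normFactor_nonneg hσ E)) q.cast_nonneg
  rw [abs_mul, abs_mul, abs_of_nonneg (colorProd_nonneg h0 E c)]
  exact mul_le_of_le_one_left (colorProd_nonneg h0 E c)
    (mul_le_one₀ (hφ _) (abs_nonneg _) (hφ _))

lemma g0_eq_ncMean (R : Matrix (Fin q) (Fin q) ℝ) {m : ℕ} (hσ : σ ≠ 0) (hq : q ≠ 0) (hn : n ≠ 0)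
    (hm : m ≤ n) :
    g0 R σ n m = (q * σ) ^ (n - m) * totalMass n m * ncMean n m (normWeight R σ) := by
  have hqσ : (q * σ : ℝ) ≠ 0 := mul_ne_zero (Nat.cast_ne_zero.2 hq) hσ
  have hpow : (q * σ : ℝ) ^ (n - m) * (q * σ) ^ m = (q * σ) ^ n := by
    rw [← pow_add, Nat.sub_add_cancel hm]
  have hfactor : ∀ E : Multigraph n, E.card = m →
      (q * σ : ℝ) ^ (n - m) * normFactor q σ E = σ ^ cc E := by
    intro E hE
    rw [normFactor, hE, ← mul_div_assoc, ← mul_assoc, hpow, mul_div_cancel_left₀ _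
      (pow_ne_zero _ hqσ)]
  rw [ncMean, mean, mul_assoc, mul_div_cancel₀ _ (totalMass_ne_zero hn m), g0, Finset.mul_sum]
  refine Finset.sum_congr rfl fun E _ => ?_
  split_ifs
  · simp only [weight_eq_mul_colorProd, ← Finset.mul_sum, normWeight, ← hfactor E.1 E.2]
    ring
  · simp

end NormWeight

section WeightSystem

/-- A normalised weight of multigraphs on `Fin n`: joining two components does not change it, and
closing a cycle multiplies it by at most `W`. -/
structure IsBridgeInvariant {n : ℕ} (W : ℝ) (w : Multigraph n → ℝ) : Prop where
  zero : w 0 = 1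
  nonneg : ∀ E, 0 ≤ w E
  cons_of_not_reach : ∀ {E x y}, ¬ Reach E x y → w (s(x, y) ::ₘ E) = w E
  cons_le_of_reach : ∀ {E x y}, Reach E x y → w (s(x, y) ::ₘ E) ≤ W * w E

/-- A correlation `P E v u` between the vertices `v` and `u`, relative to the weight `w E`, that
decays by a factor `l` along each bridge. -/
structure IsCorrelation {n : ℕ} (K l : ℝ) (w : Multigraph n → ℝ)
    (P : Multigraph n → Fin n → Fin n → ℝ) : Prop where
  self : ∀ E v, P E v v = w E
  cons : ∀ {E x u v}, Reach E x v → ¬ Reach E u v → P (s(x, u) ::ₘ E) v u = l * P E v x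
  abs_le : ∀ E v u, |P E v u| ≤ K * w E

/-- A bridge-invariant weight whose change on closing a cycle is described by correlations `Q i`
with decay factors `lam i`. -/
structure IsWeightSystem {n : ℕ} {ι : Type*} [Fintype ι] (W K σ : ℝ) (lam : ι → ℝ)
    (w : Multigraph n → ℝ) (Q : ι → Multigraph n → Fin n → Fin n → ℝ) : Prop
    extends IsBridgeInvariant W w where
  corr : ∀ i, IsCorrelation K (lam i) w (Q i)
  cons_of_reach : ∀ {E x y}, Reach E x y → w (s(x, y) ::ₘ E) = σ * ∑ i, lam i * Q i E x y

variable {q : ℕ} {R : Matrix (Fin q) (Fin q) ℝ} {ι : Type*} [Fintype ι] {lam : ι → ℝ}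
  {φ : ι → Fin q → ℝ} {σ : ℝ}

lemma isWeightSystem_normWeight (hR : IsVertexTransitive R) (hq : q ≠ 0)
    (hrow : ∀ i, ∑ j, R i j = 1) (hσ : 0 < σ) (hunit : ∀ i, ∑ a, φ i a ^ 2 = 1)
    (heig : ∀ i a, ∑ b, R a b * φ i b = lam i * φ i a)
    (hspec : ∀ a b, R a b = ∑ i, lam i * (φ i a * φ i b)) (n : ℕ) :
    IsWeightSystem (n := n) (q * σ) q σ lam (normWeight R σ) fun i => colorCorr R σ (φ i) where
  zero := normWeight_zero hq hσ.ne'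
  nonneg := normWeight_nonneg hR.2.1 hσ.le
  cons_of_not_reach := normWeight_cons_of_not_reach hR hrow
  cons_le_of_reach := normWeight_cons_le_of_reach hR.1 hR.2.1 hrow hσ.le
  cons_of_reach := normWeight_cons_of_reach hR.1 hspec
  corr i :=
    { self := colorCorr_self hR (hunit i)
      cons := colorCorr_cons hR (heig i)
      abs_le := abs_colorCorr_le hR.2.1 hσ.le fun a => by
        rw [← sq_le_one_iff_abs_le_one, ← hunit i]
        exact Finset.single_le_sum (fun j _ => sq_nonneg (φ i j)) (Finset.mem_univ a) }

end WeightSystem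
/-! ### Moments of component orders -/

section OtherTrees

variable {n : ℕ} {E : Multigraph n} {u v w x : Fin n}

lemma card_otherTrees_le (E : Multigraph n) (v : Fin n) : (otherTrees E v).card ≤ n := by
  simpa using (otherTrees E v).card_le_univ

lemma mem_otherTrees_inter : w ∈ otherTrees E v ∩ otherTrees E u ↔
    ¬ Reach E w v ∧ ¬ Reach E w u ∧ IsTreeAt E w := by
  simp only [Finset.mem_inter, mem_otherTrees]
  tauto

lemma otherTrees_cons (hx : Reach E x v) :
    otherTrees (s(x, u) ::ₘ E) v = otherTrees E v ∩ otherTrees E u := by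
  ext w
  rw [mem_otherTrees_inter, mem_otherTrees]
  have hreach : Reach (s(x, u) ::ₘ E) w v ↔ Reach E w v ∨ Reach E w u := by
    rw [reach_cons_iff_left hx]
    exact or_congr_left ⟨fun h => h.trans hx, fun h => h.trans hx.symm⟩
  rw [hreach, not_or, and_assoc]
  refine and_congr_right fun hwv => and_congr_right fun hwu => ?_
  exact isTreeAt_cons_away (fun h => hwv (h.symm.trans hx)) fun h => hwu h.symm

lemma order_cons_of_mem_inter (hx : Reach E x v) (hw : w ∈ otherTrees E v ∩ otherTrees E u) :
    order (s(x, u) ::ₘ E) w = order E w := by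
  obtain ⟨hwv, hwu, -⟩ := mem_otherTrees_inter.1 hw
  exact order_cons_away (fun h => hwv (h.symm.trans hx)) fun h => hwu h.symm

lemma otherTrees_inter_cons_subset (hx : Reach E x v) (hw : w ∈ otherTrees E v ∩ otherTrees E u) :
    otherTrees (s(x, u) ::ₘ E) v ∩ otherTrees (s(x, u) ::ₘ E) w ⊆
      (otherTrees E v ∩ otherTrees E u) ∩ otherTrees E w := by
  obtain ⟨hwv, hwu, -⟩ := mem_otherTrees_inter.1 hw
  intro z hz
  rw [otherTrees_cons hx, Finset.mem_inter, mem_otherTrees,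
    reach_cons_iff_away (fun h => hwv (h.symm.trans hx)) fun h => hwu h.symm] at hz
  exact Finset.mem_inter.2 ⟨hz.1, mem_otherTrees.2 ⟨hz.2.1, (mem_otherTrees_inter.1 hz.1).2.2⟩⟩

lemma order_cons_of_reach_left (hx : Reach E x v) (hu : ¬ Reach E u v) :
    (order (s(x, u) ::ₘ E) v : ℝ) = order E v + order E u := by
  rw [order_cons_left (fun h => hu (h.symm.trans hx)) hx, order_congr hx, Nat.cast_add]

lemma treeMean_sum_otherTrees_comm (i : ℕ) (G : Multigraph n → Fin n → Fin n → ℝ) :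
    treeMean n i (fun E v => ∑ u ∈ otherTrees E v, G E v u) =
      treeMean n i fun E v => ∑ u ∈ otherTrees E v, G E u v := by
  refine ncMean_congr fun E _ _ => Finset.sum_comm' fun v u => ?_
  simp only [mem_treeVerts, mem_otherTrees]
  exact ⟨fun h => ⟨⟨fun huv => h.2.1 huv.symm, h.1⟩, h.2.2⟩,
    fun h => ⟨h.1.2, fun huv => h.1.1 huv.symm, h.2⟩⟩

lemma treeMean_sum_otherTrees_le (i : ℕ) {F : Multigraph n → Fin n → ℝ} (hF : ∀ E v, 0 ≤ F E v) :
    treeMean n i (fun E v => ∑ u ∈ otherTrees E v, F E u) ≤ n * treeMean n i F := by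
  rw [treeMean_sum_otherTrees_comm i fun E _ u => F E u, ← treeMean_const_mul]
  refine treeMean_mono fun E v _ _ => ?_
  rw [Finset.sum_const, nsmul_eq_mul]
  gcongr
  exacts [hF E v, card_otherTrees_le E v]

/-- Splitting off the root `u = v` in `treeMean_sum_erase_component`. -/
lemma treeMean_sum_component (i : ℕ) (G : Multigraph n → Fin n → Fin n → ℝ) :
    treeMean n (i + 1) (fun E v => ∑ u ∈ component E v, G E v u) =
      treeMean n (i + 1) (fun E v => G E v v) + 2 * (i + 1) / n ^ 2 * treeMean n i fun E v =>
        ∑ x ∈ component E v, ∑ u ∈ otherTrees E v, G (s(x, u) ::ₘ E) v u := by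
  rw [← treeMean_sum_erase_component, ← treeMean_add]
  simp only [Finset.add_sum_erase _ _ (self_mem_component _ _)]

end OtherTrees

/-- The regime `0 < n`, `0 ≤ β < 1`, `2 M ≤ β n`: multigraphs on `n` vertices with at most `M`
edges are subcritical, with `(1 - β)⁻¹` controlling the expected component order. -/
structure IsSubcritical (n M : ℕ) (β : ℝ) : Prop where
  pos : 0 < n
  nonneg : 0 ≤ β
  lt_one : β < 1
  two_mul_le : 2 * (M : ℝ) ≤ β * n

namespace IsSubcritical

variable {n M i : ℕ} {β : ℝ}

lemma one_le_inv (h : IsSubcritical n M β) : 1 ≤ (1 - β)⁻¹ :=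
  (one_le_inv₀ (sub_pos.2 h.lt_one)).2 (by linarith [h.nonneg])

lemma two_mul_succ_div_le (h : IsSubcritical n M β) (hi : i + 1 ≤ M) :
    2 * ((i : ℝ) + 1) / n ^ 2 ≤ β / n := by
  have hn : (0 : ℝ) < n := Nat.cast_pos.2 h.pos
  have hiM : (i : ℝ) + 1 ≤ M := by exact_mod_cast hi
  rw [div_le_div_iff₀ (by positivity) hn]
  nlinarith [h.two_mul_le]

lemma two_mul_div_mem_Icc (h : IsSubcritical n M β) (hi : i ≤ M) :
    2 * (i : ℝ) / n ∈ Set.Icc 0 β := by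
  have hiM : (i : ℝ) ≤ M := Nat.cast_le.2 hi
  refine ⟨by positivity, (div_le_iff₀ (Nat.cast_pos.2 h.pos)).2 ?_⟩
  linarith [h.two_mul_le]

lemma mono (h : IsSubcritical n M β) (hi : i ≤ M) : IsSubcritical n i β :=
  ⟨h.pos, h.nonneg, h.lt_one, by
    have : (i : ℝ) ≤ M := Nat.cast_le.2 hi
    linarith [h.two_mul_le]⟩

end IsSubcritical

section OrderRecursion

variable {n M : ℕ} {β c₁ c₂ : ℝ} {F : Multigraph n → Fin n → ℝ}
  {D : Multigraph n → Fin n → Fin n → ℝ}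

lemma treeMean_order_mul_zero (F : Multigraph n → Fin n → ℝ) :
    treeMean n 0 (fun E v => order E v * F E v) = treeMean n 0 F := by
  simp [treeMean, ncMean_zero, order_zero]

lemma treeMean_order_mul_succ_le (i : ℕ) (hF : ∀ E v, 0 ≤ F E v)
    (hcons : ∀ E x u v, Reach E x v → u ∈ otherTrees E v → IsTreeAt E v →
      F (s(x, u) ::ₘ E) v ≤ F E v + D E v u) :
    treeMean n (i + 1) (fun E v => order E v * F E v) ≤ treeMean n (i + 1) F +
      2 * (i + 1) / n ^ 2 * (n * treeMean n i (fun E v => order E v * F E v) +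
        treeMean n i fun E v => order E v * ∑ u ∈ otherTrees E v, D E v u) := by
  have horder : ∀ (E : Multigraph n) v, (order E v : ℝ) * F E v = ∑ _u ∈ component E v, F E v := by
    intro E v
    rw [Finset.sum_const, nsmul_eq_mul, order]
  rw [funext₂ horder, treeMean_sum_component i fun E v _ => F E v, ← funext₂ horder,
    ← treeMean_const_mul (n : ℝ), ← treeMean_add]
  gcongr
  refine treeMean_mono fun E v _ hv => ?_
  calc ∑ x ∈ component E v, ∑ u ∈ otherTrees E v, F (s(x, u) ::ₘ E) v
      ≤ ∑ _x ∈ component E v, ∑ u ∈ otherTrees E v, (F E v + D E v u) :=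
        Finset.sum_le_sum fun x hx => Finset.sum_le_sum fun u hu =>
          hcons E x u v (mem_component.1 hx) hu hv
    _ = (otherTrees E v).card * (order E v * F E v) +
          order E v * ∑ u ∈ otherTrees E v, D E v u := by
        rw [Finset.sum_const, Finset.sum_add_distrib, Finset.sum_const, nsmul_eq_mul, nsmul_eq_mul,
          order]
        ring
    _ ≤ n * (order E v * F E v) + order E v * ∑ u ∈ otherTrees E v, D E v u := by
        gcongr
        exacts [mul_nonneg (Nat.cast_nonneg _) (hF E v), card_otherTrees_le E v]

/-- The fixed point of `T ↦ c₁ + β (T + c₂)` is at most `(c₁ + c₂) / (1 - β)`, and `β` bounds the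
coefficient `2 (i + 1) / n` in the recursion. -/
lemma IsSubcritical.treeMean_order_mul_le (h : IsSubcritical n M β) (hF : ∀ E v, 0 ≤ F E v)
    (hcons : ∀ E x u v, Reach E x v → u ∈ otherTrees E v → IsTreeAt E v →
      F (s(x, u) ::ₘ E) v ≤ F E v + D E v u) (hc₂ : 0 ≤ c₂) (hc₁F : ∀ i ≤ M, treeMean n i F ≤ c₁)
    (hc₂D : ∀ i ≤ M,
      treeMean n i (fun E v => order E v * ∑ u ∈ otherTrees E v, D E v u) ≤ n * c₂) :
    ∀ i ≤ M, treeMean n i (fun E v => order E v * F E v) ≤ (c₁ + c₂) * (1 - β)⁻¹ := by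
  have hc₁ : 0 ≤ c₁ := (treeMean_nonneg fun E v _ _ => hF E v).trans (hc₁F 0 M.zero_le)
  have hc := h.one_le_inv
  have hfix : c₁ + β * ((c₁ + c₂) * (1 - β)⁻¹ + c₂) ≤ (c₁ + c₂) * (1 - β)⁻¹ := by
    have hinv : (1 - β) * (1 - β)⁻¹ = 1 := mul_inv_cancel₀ (sub_pos.2 h.lt_one).ne'
    nlinarith [h.lt_one]
  set T := (c₁ + c₂) * (1 - β)⁻¹
  intro i
  induction i with
  | zero =>
    intro _
    rw [treeMean_order_mul_zero]
    nlinarith [hc₁F 0 M.zero_le]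
  | succ i ih =>
    intro hi
    have hi' : i ≤ M := (Nat.le_succ i).trans hi
    have hn : (0 : ℝ) < n := Nat.cast_pos.2 h.pos
    calc _ ≤ _ := treeMean_order_mul_succ_le i hF hcons
      _ ≤ c₁ + 2 * (i + 1) / n ^ 2 * (n * T + n * c₂) := by
          gcongr
          exacts [hc₁F _ hi, ih hi', hc₂D i hi']
      _ ≤ c₁ + β / n * (n * T + n * c₂) := by
          gcongr c₁ + ?_ * (_)
          exact h.two_mul_succ_div_le hi
      _ = c₁ + β * (T + c₂) := by field_simp
      _ ≤ T := hfix

end OrderRecursion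

/-- A nonnegative density on multigraphs that does not change when an edge joins two different tree
components. -/
structure IsMergeInvariant {n : ℕ} (ρ : Multigraph n → ℝ) : Prop where
  nonneg : ∀ E, 0 ≤ ρ E
  cons : ∀ {E x y}, ¬ Reach E x y → IsTreeAt E x → IsTreeAt E y → ρ (s(x, y) ::ₘ E) = ρ E

section MergeInvariant

variable {n M : ℕ} {β B : ℝ} {ρ : Multigraph n → ℝ}

lemma IsMergeInvariant.cons_of_mem_otherTrees (hρ : IsMergeInvariant ρ) {E : Multigraph n}
    {x u v : Fin n} (hx : Reach E x v) (hu : u ∈ otherTrees E v) (hv : IsTreeAt E v) :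
    ρ (s(x, u) ::ₘ E) = ρ E := by
  rw [mem_otherTrees] at hu
  exact hρ.cons (fun h => hu.1 (h.symm.trans hx)) ((IsTreeAt.congr hx).2 hv) hu.2

lemma IsMergeInvariant.nonneg_of_ncMean_le (hρ : IsMergeInvariant ρ)
    (hB : ∀ i ≤ M, ncMean n i ρ ≤ B) : 0 ≤ B :=
  (ncMean_nonneg fun E _ => hρ.nonneg E).trans (hB 0 M.zero_le)

variable (h : IsSubcritical n M β) (hρ : IsMergeInvariant ρ)
  (hB : ∀ i ≤ M, ncMean n i ρ ≤ B)

include h hρ hB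

lemma treeMean_order_le : ∀ i ≤ M,
    treeMean n i (fun E v => order E v * ρ E) ≤ n * B * (1 - β)⁻¹ := by
  have hbase : ∀ i ≤ M, treeMean n i (fun E _ => ρ E) ≤ n * B := by
    intro i hi
    calc treeMean n i (fun E _ => ρ E) ≤ ncMean n i fun E => n * ρ E := by
          refine ncMean_mono fun E _ _ => ?_
          rw [Finset.sum_const, nsmul_eq_mul]
          gcongr
          exacts [hρ.nonneg E, by simpa using (treeVerts E).card_le_univ]
      _ = n * ncMean n i ρ := ncMean_const_mul _ _
      _ ≤ n * B := by gcongr; exact hB i hi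
  simpa using h.treeMean_order_mul_le (D := fun _ _ _ => 0) (fun E _ => hρ.nonneg E)
    (fun E x u v hx hu hv => by rw [hρ.cons_of_mem_otherTrees hx hu hv, add_zero]) le_rfl hbase
    fun i _ => by simp [treeMean, ncMean, mean]

lemma treeMean_order_order_le : ∀ i ≤ M,
    treeMean n i (fun E v => order E v * ∑ w ∈ otherTrees E v, order E w * ρ E) ≤
      n ^ 2 * B * (1 - β)⁻¹ ^ 2 := by
  have hpos : ∀ E w, 0 ≤ order E w * ρ E := fun E w => mul_nonneg (Nat.cast_nonneg _) (hρ.nonneg E)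
  have hrec := h.treeMean_order_mul_le (D := fun _ _ _ => 0) (c₁ := n * (n * B * (1 - β)⁻¹))
    (F := fun E v => ∑ w ∈ otherTrees E v, order E w * ρ E)
    (fun E v => Finset.sum_nonneg fun w _ => hpos E w) ?_ le_rfl
    (fun i hi => (treeMean_sum_otherTrees_le i hpos).trans
      (mul_le_mul_of_nonneg_left (treeMean_order_le h hρ hB i hi) n.cast_nonneg))
    fun i _ => by simp [treeMean, ncMean, mean]
  · exact fun i hi => (hrec i hi).trans_eq (by ring)
  · intro E x u v hx hu hv
    rw [add_zero, otherTrees_cons hx, hρ.cons_of_mem_otherTrees hx hu hv,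
      Finset.sum_congr rfl fun w hw => by rw [order_cons_of_mem_inter hx hw]]
    exact Finset.sum_le_sum_of_subset_of_nonneg Finset.inter_subset_left fun w _ _ => hpos E w

lemma treeMean_order_order_order_le : ∀ i ≤ M,
    treeMean n i (fun E v => order E v * ∑ w ∈ otherTrees E v, order E w *
      ∑ z ∈ otherTrees E v ∩ otherTrees E w, order E z * ρ E) ≤ n ^ 3 * B * (1 - β)⁻¹ ^ 3 := by
  have hpos : ∀ E w, 0 ≤ order E w * ρ E := fun E w => mul_nonneg (Nat.cast_nonneg _) (hρ.nonneg E)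
  have hsum : ∀ (E : Multigraph n) w (s : Finset (Fin n)),
      0 ≤ order E w * ∑ z ∈ s, order E z * ρ E := fun E w s =>
    mul_nonneg (Nat.cast_nonneg _) (Finset.sum_nonneg fun z _ => hpos E z)
  have hbase : ∀ i ≤ M, treeMean n i (fun E v => ∑ w ∈ otherTrees E v, order E w *
      ∑ z ∈ otherTrees E v ∩ otherTrees E w, order E z * ρ E) ≤
        n * (n ^ 2 * B * (1 - β)⁻¹ ^ 2) := by
    intro i hi
    calc _ ≤ treeMean n i fun E v => ∑ w ∈ otherTrees E v, order E w *
            ∑ z ∈ otherTrees E w, order E z * ρ E := by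
          refine treeMean_mono fun E v _ _ => Finset.sum_le_sum fun w _ => ?_
          gcongr
          exacts [fun z _ _ => hpos E z, Finset.inter_subset_right]
      _ ≤ _ := treeMean_sum_otherTrees_le i fun E w => hsum E w _
      _ ≤ _ := mul_le_mul_of_nonneg_left (treeMean_order_order_le h hρ hB i hi) n.cast_nonneg
  have hrec := h.treeMean_order_mul_le (D := fun _ _ _ => 0)
    (fun E v => Finset.sum_nonneg fun w _ => hsum E w _) ?_ le_rfl hbase
    fun i _ => by simp [treeMean, ncMean, mean]
  · exact fun i hi => (hrec i hi).trans_eq (by ring)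
  · intro E x u v hx hu hv
    rw [add_zero, hρ.cons_of_mem_otherTrees hx hu hv]
    calc _ ≤ ∑ w ∈ otherTrees E v ∩ otherTrees E u, order E w *
            ∑ z ∈ otherTrees E v ∩ otherTrees E w, order E z * ρ E := by
          rw [otherTrees_cons hx]
          refine Finset.sum_le_sum fun w hw => ?_
          have hsub := otherTrees_inter_cons_subset hx hw
          rw [otherTrees_cons hx] at hsub
          rw [order_cons_of_mem_inter hx hw, Finset.sum_congr rfl fun z hz => by
            rw [order_cons_of_mem_inter hx (Finset.mem_inter.1 hz).1]]
          exact mul_le_mul_of_nonneg_left (Finset.sum_le_sum_of_subset_of_nonneg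
            (hsub.trans (Finset.inter_subset_inter_right Finset.inter_subset_left))
            fun z _ _ => hpos E z) (Nat.cast_nonneg _)
      _ ≤ _ := Finset.sum_le_sum_of_subset_of_nonneg Finset.inter_subset_left
          fun w _ _ => hsum E w _

lemma treeMean_order_sq_le : ∀ i ≤ M,
    treeMean n i (fun E v => order E v ^ 2 * ρ E) ≤ 2 * n * B * (1 - β)⁻¹ ^ 3 := by
  have hB₀ := hρ.nonneg_of_ncMean_le hB
  have hc := h.one_le_inv
  have hrec := h.treeMean_order_mul_le (F := fun E v => order E v * ρ E)
    (D := fun E _ u => order E u * ρ E) (c₂ := n * B * (1 - β)⁻¹ ^ 2)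
    (fun E v => mul_nonneg (Nat.cast_nonneg _) (hρ.nonneg E)) ?_ (by positivity)
    (treeMean_order_le h hρ hB)
    fun i hi => (treeMean_order_order_le h hρ hB i hi).trans_eq (by ring)
  · intro i hi
    calc treeMean n i (fun E v => order E v ^ 2 * ρ E)
        = treeMean n i fun E v => order E v * (order E v * ρ E) := by simp only [sq, mul_assoc]
      _ ≤ n * B * ((1 - β)⁻¹ ^ 2 + (1 - β)⁻¹ ^ 3) := (hrec i hi).trans_eq (by ring)
      _ ≤ n * B * ((1 - β)⁻¹ ^ 3 + (1 - β)⁻¹ ^ 3) := by gcongr; norm_num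
      _ = _ := by ring
  · intro E x u v hx hu hv
    rw [order_cons_of_reach_left hx (mem_otherTrees.1 hu).1, hρ.cons_of_mem_otherTrees hx hu hv,
      add_mul]

lemma treeMean_order_sq_order_le : ∀ i ≤ M,
    treeMean n i (fun E v => order E v ^ 2 * ∑ w ∈ otherTrees E v, order E w * ρ E) ≤
      2 * n ^ 2 * B * (1 - β)⁻¹ ^ 4 := by
  have hB₀ := hρ.nonneg_of_ncMean_le hB
  have hc := h.one_le_inv
  have hpos : ∀ E w, 0 ≤ order E w * ρ E := fun E w => mul_nonneg (Nat.cast_nonneg _) (hρ.nonneg E)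
  have hrec := h.treeMean_order_mul_le
    (F := fun E v => order E v * ∑ w ∈ otherTrees E v, order E w * ρ E)
    (D := fun E v u => order E u * ∑ w ∈ otherTrees E v ∩ otherTrees E u, order E w * ρ E)
    (c₂ := n ^ 2 * B * (1 - β)⁻¹ ^ 3)
    (fun E v => mul_nonneg (Nat.cast_nonneg _) (Finset.sum_nonneg fun w _ => hpos E w)) ?_
    (by positivity) (treeMean_order_order_le h hρ hB)
    fun i hi => (treeMean_order_order_order_le h hρ hB i hi).trans_eq (by ring)
  · intro i hi
    calc _ = treeMean n i fun E v =>
            order E v * (order E v * ∑ w ∈ otherTrees E v, order E w * ρ E) := by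
          simp only [sq, mul_assoc]
      _ ≤ n ^ 2 * B * ((1 - β)⁻¹ ^ 3 + (1 - β)⁻¹ ^ 4) := (hrec i hi).trans_eq (by ring)
      _ ≤ n ^ 2 * B * ((1 - β)⁻¹ ^ 4 + (1 - β)⁻¹ ^ 4) := by gcongr; norm_num
      _ = _ := by ring
  · intro E x u v hx hu hv
    rw [order_cons_of_reach_left hx (mem_otherTrees.1 hu).1, hρ.cons_of_mem_otherTrees hx hu hv,
      otherTrees_cons hx, Finset.sum_congr rfl fun w hw => by rw [order_cons_of_mem_inter hx hw],
      add_mul]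
    gcongr
    exacts [fun z _ _ => hpos E z, Finset.inter_subset_left]

lemma treeMean_order_cube_le : ∀ i ≤ M,
    treeMean n i (fun E v => order E v ^ 3 * ρ E) ≤ 8 * n * B * (1 - β)⁻¹ ^ 5 := by
  have hB₀ := hρ.nonneg_of_ncMean_le hB
  have hc := h.one_le_inv
  have hcross : ∀ i ≤ M, treeMean n i (fun E v => order E v * ∑ u ∈ otherTrees E v,
      (2 * order E v * order E u + order E u ^ 2) * ρ E) ≤
        n * (6 * n * B * (1 - β)⁻¹ ^ 4) := by
    intro i hi
    calc _ = treeMean n i (fun E v => ∑ u ∈ otherTrees E v,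
              2 * (order E v ^ 2 * (order E u * ρ E))) +
            treeMean n i (fun E v => ∑ u ∈ otherTrees E v,
              order E u ^ 2 * (order E v * ρ E)) := by
          rw [← treeMean_add]
          simp only [Finset.mul_sum, ← Finset.sum_add_distrib]
          congr! 4 with E v u
          ring
      _ = 3 * treeMean n i (fun E v =>
            order E v ^ 2 * ∑ u ∈ otherTrees E v, order E u * ρ E) := by
          rw [treeMean_sum_otherTrees_comm i fun E v u => (order E u : ℝ) ^ 2 * (order E v * ρ E)]
          simp only [← Finset.mul_sum, treeMean_const_mul]
          ring
      _ ≤ 3 * (2 * n ^ 2 * B * (1 - β)⁻¹ ^ 4) := by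
          gcongr
          exact treeMean_order_sq_order_le h hρ hB i hi
      _ = _ := by ring
  have hrec := h.treeMean_order_mul_le (F := fun E v => order E v ^ 2 * ρ E)
    (fun E v => mul_nonneg (sq_nonneg _) (hρ.nonneg E)) ?_ (by positivity)
    (treeMean_order_sq_le h hρ hB) hcross
  · intro i hi
    calc treeMean n i (fun E v => order E v ^ 3 * ρ E)
        = treeMean n i fun E v => order E v * (order E v ^ 2 * ρ E) := by
          simp only [pow_succ', pow_zero, mul_one, mul_assoc]
      _ ≤ 2 * n * B * ((1 - β)⁻¹ ^ 4 + 3 * (1 - β)⁻¹ ^ 5) := (hrec i hi).trans_eq (by ring)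
      _ ≤ 2 * n * B * ((1 - β)⁻¹ ^ 5 + 3 * (1 - β)⁻¹ ^ 5) := by gcongr; norm_num
      _ = _ := by ring
  · intro E x u v hx hu hv
    rw [order_cons_of_reach_left hx (mem_otherTrees.1 hu).1, hρ.cons_of_mem_otherTrees hx hu hv]
    exact le_of_eq (by ring)

end MergeInvariant
/-! ### The edge-adding process -/

/-- The number of vertices lying in components that contain a cycle. -/
def cyclicCount {n : ℕ} (E : Multigraph n) : ℕ :=
  (Finset.univ \ treeVerts E).card

section CyclicCount

variable {n : ℕ} {E : Multigraph n} {v x y : Fin n}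

lemma cyclicCount_zero : cyclicCount (0 : Multigraph n) = 0 := by
  rw [cyclicCount, Finset.card_eq_zero, Finset.sdiff_eq_empty_iff_subset]
  exact fun v _ => mem_treeVerts.2 (isTreeAt_zero v)

lemma card_treeVerts_add_cyclicCount (E : Multigraph n) :
    ((treeVerts E).card : ℝ) + cyclicCount E = n := by
  rw [cyclicCount, ← Nat.cast_add, add_comm, Finset.card_sdiff_add_card_eq_card
    (Finset.subset_univ _), Finset.card_fin]

lemma card_otherTrees_add (hv : IsTreeAt E v) :
    ((otherTrees E v).card : ℝ) + order E v + cyclicCount E = n := by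
  have hsplit : treeVerts E = otherTrees E v ∪ component E v := by
    ext u
    simp only [mem_treeVerts, Finset.mem_union, mem_otherTrees, mem_component]
    by_cases h : Reach E u v
    · simp [h, IsTreeAt.congr h, hv]
    · simp [h]
  have hdisj : Disjoint (otherTrees E v) (component E v) :=
    Finset.disjoint_left.2 fun u hu hu' => (mem_otherTrees.1 hu).1 (mem_component.1 hu')
  rw [← card_treeVerts_add_cyclicCount E, hsplit, Finset.card_union_of_disjoint hdisj,
    Nat.cast_add, order]

lemma cyclicCount_cons_of_isTreeAt (h : ¬ Reach E x y) (hx : IsTreeAt E x) (hy : IsTreeAt E y) :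
    cyclicCount (s(x, y) ::ₘ E) = cyclicCount E := by
  rw [cyclicCount, cyclicCount]
  congr 2
  ext v
  rw [mem_treeVerts, mem_treeVerts]
  by_cases hxv : Reach E x v
  · simp [isTreeAt_cons_left h hxv, hx, hy, ← IsTreeAt.congr hxv]
  by_cases hyv : Reach E y v
  · simp [isTreeAt_cons_right h hyv, hx, hy, ← IsTreeAt.congr hyv]
  · exact isTreeAt_cons_away hxv hyv

lemma cyclicCount_cons_le (h : Reach E x y) (hv : Reach E x v) :
    cyclicCount (s(x, y) ::ₘ E) ≤ cyclicCount E + order E v := by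
  refine (Finset.card_le_card fun u hu => ?_).trans (Finset.card_union_le _ (component E v))
  simp only [Finset.mem_sdiff, Finset.mem_univ, true_and, mem_treeVerts, Finset.mem_union,
    mem_component, isTreeAt_cons_of_reach h] at hu ⊢
  by_contra! hu'
  exact hu ⟨hu'.1, fun hxu => hu'.2 (hxu.symm.trans hv)⟩

end CyclicCount

section Step

variable {n M i : ℕ} {β B W : ℝ} {w : Multigraph n → ℝ}

namespace IsBridgeInvariant

lemma const_nonneg (hw : IsBridgeInvariant W w) (hn : 0 < n) : 0 ≤ W := by
  simpa [hw.zero] using (hw.nonneg _).trans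
    (hw.cons_le_of_reach (SimpleGraph.Reachable.refl (⟨0, hn⟩ : Fin n) : Reach 0 _ _))

lemma isMergeInvariant (hw : IsBridgeInvariant W w) : IsMergeInvariant w where
  nonneg := hw.nonneg
  cons h _ _ := hw.cons_of_not_reach h

lemma isMergeInvariant_cyclicCount (hw : IsBridgeInvariant W w) :
    IsMergeInvariant fun E => cyclicCount E * w E where
  nonneg E := mul_nonneg (Nat.cast_nonneg _) (hw.nonneg E)
  cons h hx hy := by rw [cyclicCount_cons_of_isTreeAt h hx hy, hw.cons_of_not_reach h]

lemma sum_pairs_cons (hw : IsBridgeInvariant W w) (E : Multigraph n) :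
    (∑ x, ∑ y, if IsTreeAt E x ∨ IsTreeAt E y then w (s(x, y) ::ₘ E) else 0) =
      n ^ 2 * w E + (∑ v ∈ treeVerts E, ∑ y ∈ component E v, (w (s(v, y) ::ₘ E) - w E)) -
        cyclicCount E ^ 2 * w E := by
  have hpair : ∀ x y, (if IsTreeAt E x ∨ IsTreeAt E y then w (s(x, y) ::ₘ E) else 0) =
      w E + (if IsTreeAt E x then if Reach E y x then w (s(x, y) ::ₘ E) - w E else 0 else 0) -
        (if ¬ IsTreeAt E x then 1 else 0) * (if ¬ IsTreeAt E y then 1 else 0) * w E := by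
    intro x y
    by_cases hyx : Reach E y x
    · by_cases hx : IsTreeAt E x <;> simp [hyx, hx, IsTreeAt.congr hyx]
    · have hxy : ¬ Reach E x y := fun h => hyx h.symm
      by_cases hx : IsTreeAt E x <;> by_cases hy : IsTreeAt E y <;>
        simp [hyx, hx, hy, hw.cons_of_not_reach hxy]
  have hcyclic : ∑ x, (if ¬ IsTreeAt E x then 1 else 0 : ℝ) = cyclicCount E := by
    rw [Finset.sum_boole, cyclicCount, treeVerts, ← Finset.compl_eq_univ_sdiff,
      Finset.compl_filter]
  have hclose : ∑ v ∈ treeVerts E, ∑ y ∈ component E v, (w (s(v, y) ::ₘ E) - w E) = ∑ x, ∑ y,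
      if IsTreeAt E x then if Reach E y x then w (s(x, y) ::ₘ E) - w E else 0 else 0 := by
    simp only [treeVerts, component, Finset.sum_filter, Finset.sum_ite_irrel,
      Finset.sum_const_zero]
  rw [hclose]
  simp only [hpair, Finset.sum_sub_distrib, Finset.sum_add_distrib, ← Finset.sum_mul,
    ← Finset.mul_sum, hcyclic, Finset.sum_const, Finset.card_fin, nsmul_eq_mul]
  ring

lemma ncMean_succ_eq (hw : IsBridgeInvariant W w) (hn : 0 < n) (i : ℕ) :
    ncMean n (i + 1) w = ncMean n i w + 1 / n ^ 2 *
      (treeMean n i (fun E v => ∑ y ∈ component E v, (w (s(v, y) ::ₘ E) - w E)) -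
        ncMean n i fun E => cyclicCount E ^ 2 * w E) := by
  have hn' : (n : ℝ) ≠ 0 := by positivity
  simp only [ncMean_succ, hw.sum_pairs_cons, ncMean_sub, ncMean_add, ncMean_const_mul, treeMean]
  field_simp
  ring

lemma abs_treeMean_closure_le (hw : IsBridgeInvariant W w) :
    |treeMean n i (fun E v => ∑ y ∈ component E v, (w (s(v, y) ::ₘ E) - w E))| ≤
      (W + 1) * treeMean n i fun E v => order E v * w E := by
  rw [← treeMean_const_mul]
  refine abs_treeMean_le fun E v _ _ => ?_
  calc |∑ y ∈ component E v, (w (s(v, y) ::ₘ E) - w E)|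
      ≤ ∑ y ∈ component E v, |w (s(v, y) ::ₘ E) - w E| := Finset.abs_sum_le_sum_abs _ _
    _ ≤ ∑ _y ∈ component E v, (W + 1) * w E := by
        refine Finset.sum_le_sum fun y hy => abs_le.2 ?_
        have hle := hw.cons_le_of_reach (mem_component.1 hy).symm
        constructor <;> linarith [hw.nonneg E, hw.nonneg (s(v, y) ::ₘ E)]
    _ = (W + 1) * (order E v * w E) := by
        rw [Finset.sum_const, nsmul_eq_mul, order]
        ring

lemma ncMean_le_pow (hw : IsBridgeInvariant W w) (h : IsSubcritical n M β) :
    ncMean n M w ≤ (1 + (W + 1) * (1 - β)⁻¹ / n) ^ M := by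
  have hn : (0 : ℝ) < n := Nat.cast_pos.2 h.pos
  have hW := hw.const_nonneg h.pos
  have hc := h.one_le_inv
  induction M using Nat.strong_induction_on with
  | _ M ih =>
  obtain _ | M := M
  · simp [ncMean_zero, hw.zero]
  set r := (W + 1) * (1 - β)⁻¹ / n with hr
  have hr₀ : 0 ≤ r := by positivity
  have hB : ∀ i ≤ M, ncMean n i w ≤ (1 + r) ^ M := fun i hi =>
    (ih i (Nat.lt_succ_of_le hi) (h.mono (hi.trans M.le_succ))).trans
      (pow_le_pow_right₀ (le_add_of_nonneg_right hr₀) hi)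
  have horder := treeMean_order_le (h.mono M.le_succ) hw.isMergeInvariant hB M le_rfl
  have hcyclic : 0 ≤ ncMean n M fun E => cyclicCount E ^ 2 * w E :=
    ncMean_nonneg fun E _ => mul_nonneg (sq_nonneg _) (hw.nonneg E)
  calc ncMean n (M + 1) w
      = ncMean n M w + 1 / n ^ 2 * (_ - _) := hw.ncMean_succ_eq h.pos M
    _ ≤ (1 + r) ^ M + 1 / n ^ 2 * ((W + 1) * (n * (1 + r) ^ M * (1 - β)⁻¹) - 0) := by
        gcongr
        · exact hB M le_rfl
        · exact (le_abs_self _).trans (hw.abs_treeMean_closure_le.trans (by gcongr))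
    _ = (1 + r) ^ (M + 1) := by
        rw [pow_succ (1 + r)]
        generalize (1 + r) ^ M = X
        rw [hr]
        field_simp
        ring

lemma ncMean_le_exp (hw : IsBridgeInvariant W w) (h : IsSubcritical n M β) :
    ncMean n M w ≤ Real.exp ((W + 1) * (1 - β)⁻¹) := by
  have hn : (0 : ℝ) < n := Nat.cast_pos.2 h.pos
  have hW := hw.const_nonneg h.pos
  have hc := h.one_le_inv
  have hMn : (M : ℝ) ≤ n := by nlinarith [h.two_mul_le, h.lt_one]
  calc ncMean n M w ≤ (1 + (W + 1) * (1 - β)⁻¹ / n) ^ M := hw.ncMean_le_pow h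
    _ ≤ Real.exp ((W + 1) * (1 - β)⁻¹ / n) ^ M := by
        gcongr
        linarith [Real.add_one_le_exp ((W + 1) * (1 - β)⁻¹ / n)]
    _ = Real.exp (M * ((W + 1) * (1 - β)⁻¹ / n)) := (Real.exp_nat_mul _ _).symm
    _ ≤ Real.exp (n * ((W + 1) * (1 - β)⁻¹ / n)) := by gcongr
    _ = Real.exp ((W + 1) * (1 - β)⁻¹) := by rw [mul_div_cancel₀ _ hn.ne']

end IsBridgeInvariant

end Step

section CycleRemoval

variable {n M : ℕ} {β B W : ℝ} {w : Multigraph n → ℝ}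

/-- Every vertex of a component with a cycle is joined to an edge whose removal keeps the component
connected. -/
lemma cyclicCount_mul_le (E : Multigraph n) {Ψ : Multigraph n → ℝ} (hΨ : 0 ≤ Ψ E) :
    cyclicCount E * Ψ E ≤ (E.map fun e => ∑ v,
      if ∀ u ∈ e, Reach (E.erase e) u v then Ψ (e ::ₘ E.erase e) else 0).sum := by
  have hswap : (E.map fun e => ∑ v,
        if ∀ u ∈ e, Reach (E.erase e) u v then Ψ (e ::ₘ E.erase e) else 0).sum =
      ∑ v, (E.map fun e => if ∀ u ∈ e, Reach (E.erase e) u v then Ψ E else 0).sum := by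
    rw [Multiset.map_congr rfl fun e he => by rw [Multiset.cons_erase he]]
    simp only [Finset.sum]
    exact Multiset.sum_map_sum_map _ _
  rw [hswap, cyclicCount, ← nsmul_eq_mul, ← Finset.sum_const]
  have hnonneg : ∀ v, ∀ a ∈ E.map fun e => if ∀ u ∈ e, Reach (E.erase e) u v then Ψ E else 0,
      0 ≤ a := by
    intro v a ha
    obtain ⟨e, -, rfl⟩ := Multiset.mem_map.1 ha
    positivity
  refine (Finset.sum_le_sum fun v hv => ?_).trans <| Finset.sum_le_sum_of_subset_of_nonneg
    (Finset.subset_univ _) fun v _ _ => Multiset.sum_nonneg (hnonneg v)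
  rw [Finset.mem_sdiff, mem_treeVerts] at hv
  obtain ⟨x, y, E', rfl, hxy, hxv⟩ := exists_cycle_edge hv.2
  refine le_trans (le_of_eq ?_) (Multiset.single_le_sum (hnonneg v) _
    (Multiset.mem_map_of_mem _ (Multiset.mem_cons_self s(x, y) E')))
  rw [Multiset.erase_cons_head, if_pos]
  simp [hxv, hxy.symm.trans hxv]

lemma sum_pairs_closing_edge (E : Multigraph n) (Ψ : Multigraph n → ℝ) :
    (∑ x, ∑ y, ∑ v, if ∀ u ∈ s(x, y), Reach E u v then
        if NoComplex (s(x, y) ::ₘ E) then Ψ (s(x, y) ::ₘ E) else 0 else 0) =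
      if NoComplex E then ∑ v ∈ treeVerts E, ∑ x ∈ component E v, ∑ y ∈ component E v,
        Ψ (s(x, y) ::ₘ E) else 0 := by
  have hclose : ∀ x y v, (if ∀ u ∈ s(x, y), Reach E u v then
      if NoComplex (s(x, y) ::ₘ E) then Ψ (s(x, y) ::ₘ E) else 0 else 0) =
      if NoComplex E then if IsTreeAt E v then if Reach E x v then if Reach E y v then
        Ψ (s(x, y) ::ₘ E) else 0 else 0 else 0 else 0 := by
    intro x y v
    simp only [Sym2.ball]
    by_cases hxy : Reach E x v ∧ Reach E y v
    · have hnc := noComplex_cons_of_reach (hxy.1.trans hxy.2.symm)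
      simp only [hxy, and_self, if_true, hnc, IsTreeAt.congr hxy.1, ite_and]
    · rw [if_neg hxy, ← ite_and (Reach E x v), if_neg hxy, ite_self, ite_self]
  simp only [hclose, treeVerts, component, Finset.sum_filter]
  rw [Finset.sum_congr rfl fun x _ => Finset.sum_comm, Finset.sum_comm]
  simp only [Finset.sum_ite_irrel, Finset.sum_const_zero]

lemma ncMean_cyclicCount_mul_succ_le (i : ℕ) {Ψ : Multigraph n → ℝ} (hΨ : ∀ E, 0 ≤ Ψ E) :
    ncMean n (i + 1) (fun E => cyclicCount E * Ψ E) ≤ (i + 1) / n ^ 2 * treeMean n i fun E v =>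
      ∑ x ∈ component E v, ∑ y ∈ component E v, Ψ (s(x, y) ::ₘ E) := by
  let Ψ₀ (E : Multigraph n) : ℝ := if NoComplex E then Ψ E else 0
  have hΨ₀ : ∀ E, 0 ≤ Ψ₀ E := fun E => by positivity [hΨ E]
  calc ncMean n (i + 1) (fun E => cyclicCount E * Ψ E)
      = mean n (i + 1) fun E => cyclicCount E * Ψ₀ E := by simp only [ncMean, Ψ₀, mul_ite, mul_zero]
    _ ≤ mean n (i + 1) fun E => (E.map fun e => ∑ v,
          if ∀ u ∈ e, Reach (E.erase e) u v then Ψ₀ (e ::ₘ E.erase e) else 0).sum :=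
        mean_mono fun E _ => cyclicCount_mul_le E (hΨ₀ E)
    _ = (i + 1) / n ^ 2 * mean n i fun E => ∑ x, ∑ y, ∑ v,
          if ∀ u ∈ s(x, y), Reach E u v then Ψ₀ (s(x, y) ::ₘ E) else 0 :=
        mean_sum_edges i fun E e => ∑ v, if ∀ u ∈ e, Reach E u v then Ψ₀ (e ::ₘ E) else 0
    _ = _ := by simp only [treeMean, ncMean, Ψ₀, sum_pairs_closing_edge]

namespace IsBridgeInvariant

lemma ncMean_cyclicCount_mul_le (hw : IsBridgeInvariant W w) (h : IsSubcritical n M β) {X : ℝ}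
    {f : Multigraph n → ℝ} {f' : Multigraph n → Fin n → ℝ} (hf₀ : ∀ E, 0 ≤ f E)
    (hf : ∀ E x y v, Reach E x y → Reach E x v → f (s(x, y) ::ₘ E) ≤ f' E v)
    (hX : ∀ i ≤ M, treeMean n i (fun E v => order E v ^ 2 * (f' E v * w E)) ≤ 2 * n * X) :
    ∀ i ≤ M, ncMean n i (fun E => cyclicCount E * (f E * w E)) ≤ W * X := by
  have hn : (0 : ℝ) < n := Nat.cast_pos.2 h.pos
  have hW := hw.const_nonneg h.pos
  have hf'₀ : ∀ E v, 0 ≤ f' E v := fun E v => (hf₀ _).trans (hf E v v v .rfl .rfl)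
  have hX₀ : 0 ≤ 2 * n * X := (treeMean_nonneg fun E v _ _ =>
    mul_nonneg (sq_nonneg _) (mul_nonneg (hf'₀ E v) (hw.nonneg E))).trans (hX 0 M.zero_le)
  have hX₀' : 0 ≤ X := nonneg_of_mul_nonneg_right hX₀ (by positivity)
  rintro (_ | i) hi
  · simpa [ncMean_zero, cyclicCount_zero] using mul_nonneg hW hX₀'
  have hclose : ∀ (E : Multigraph n) v, ∑ x ∈ component E v, ∑ y ∈ component E v,
      f (s(x, y) ::ₘ E) * w (s(x, y) ::ₘ E) ≤ W * (order E v ^ 2 * (f' E v * w E)) := by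
    intro E v
    calc _ ≤ ∑ _x ∈ component E v, ∑ _y ∈ component E v, f' E v * (W * w E) := by
          refine Finset.sum_le_sum fun x hx => Finset.sum_le_sum fun y hy => ?_
          rw [mem_component] at hx hy
          have hxy := hx.trans hy.symm
          exact mul_le_mul (hf E x y v hxy hx) (hw.cons_le_of_reach hxy) (hw.nonneg _) (hf'₀ E v)
      _ = _ := by
          rw [Finset.sum_const, Finset.sum_const, nsmul_eq_mul, nsmul_eq_mul, order]
          ring
  calc ncMean n (i + 1) (fun E => cyclicCount E * (f E * w E))
      ≤ (i + 1) / n ^ 2 * treeMean n i fun E v => ∑ x ∈ component E v, ∑ y ∈ component E v,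
          f (s(x, y) ::ₘ E) * w (s(x, y) ::ₘ E) :=
        ncMean_cyclicCount_mul_succ_le i fun E => mul_nonneg (hf₀ E) (hw.nonneg E)
    _ ≤ (i + 1) / n ^ 2 * (W * treeMean n i fun E v => order E v ^ 2 * (f' E v * w E)) := by
        rw [← treeMean_const_mul W]
        gcongr
        exact treeMean_mono fun E v _ _ => hclose E v
    _ ≤ (i + 1) / n ^ 2 * (W * (2 * n * X)) := by
        gcongr
        exact hX i ((Nat.le_succ i).trans hi)
    _ = 2 * (i + 1) / n ^ 2 * (n * (W * X)) := by ring
    _ ≤ β / n * (n * (W * X)) := by gcongr ?_ * _; exact h.two_mul_succ_div_le hi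
    _ = β * (W * X) := by field_simp
    _ ≤ W * X := mul_le_of_le_one_left (by positivity) h.lt_one.le

variable (hw : IsBridgeInvariant W w) (h : IsSubcritical n M β) (hB : ∀ i ≤ M, ncMean n i w ≤ B)

include hw h hB

lemma ncMean_cyclicCount_le :
    ∀ i ≤ M, ncMean n i (fun E => cyclicCount E * w E) ≤ W * B * (1 - β)⁻¹ ^ 3 := by
  have hX := hw.ncMean_cyclicCount_mul_le h (X := B * (1 - β)⁻¹ ^ 3) (f := fun _ => 1)
    (f' := fun _ _ => 1) (fun _ => zero_le_one) (fun _ _ _ _ _ _ => le_rfl) fun i hi => by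
      simpa [mul_assoc] using treeMean_order_sq_le h hw.isMergeInvariant hB i hi
  simpa [mul_assoc] using hX

lemma ncMean_cyclicCount_sq_le : ∀ i ≤ M,
    ncMean n i (fun E => cyclicCount E ^ 2 * w E) ≤ W * (W + 4) * B * (1 - β)⁻¹ ^ 6 := by
  have hc := h.one_le_inv
  have hB₀ := hw.isMergeInvariant.nonneg_of_ncMean_le hB
  have hX := hw.ncMean_cyclicCount_mul_le h (X := (W + 4) * B * (1 - β)⁻¹ ^ 6)
    (f := fun E => cyclicCount E) (f' := fun E v => cyclicCount E + order E v)
    (fun _ => Nat.cast_nonneg _)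
    (fun E x y v hxy hv => by exact_mod_cast cyclicCount_cons_le hxy hv)
    fun i hi => ?_
  · simpa only [sq, mul_assoc] using hX
  calc treeMean n i (fun E v => order E v ^ 2 * ((cyclicCount E + order E v) * w E))
      = treeMean n i (fun E v => order E v ^ 2 * (cyclicCount E * w E)) +
          treeMean n i (fun E v => order E v ^ 3 * w E) := by
        rw [← treeMean_add]
        congr! 3 with E v
        ring
    _ ≤ 2 * n * (W * B * (1 - β)⁻¹ ^ 3) * (1 - β)⁻¹ ^ 3 + 8 * n * B * (1 - β)⁻¹ ^ 5 :=
        add_le_add (treeMean_order_sq_le h hw.isMergeInvariant_cyclicCount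
          (hw.ncMean_cyclicCount_le h hB) i hi)
          (treeMean_order_cube_le h hw.isMergeInvariant hB i hi)
    _ ≤ 2 * n * (W * B * (1 - β)⁻¹ ^ 3) * (1 - β)⁻¹ ^ 3 + 8 * n * B * (1 - β)⁻¹ ^ 6 := by
        gcongr
        norm_num
    _ = 2 * n * ((W + 4) * B * (1 - β)⁻¹ ^ 6) := by ring

lemma abs_ncMean_succ_sub_le (i : ℕ) (hi : i + 1 ≤ M) :
    |ncMean n (i + 1) w - ncMean n i w| ≤ (W + 3) ^ 2 * B * (1 - β)⁻¹ ^ 6 / n := by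
  have hn : (1 : ℝ) ≤ n := Nat.one_le_cast.2 h.pos
  have hW := hw.const_nonneg h.pos
  have hc := h.one_le_inv
  have hB₀ := hw.isMergeInvariant.nonneg_of_ncMean_le hB
  have hiM : i ≤ M := (Nat.le_succ i).trans hi
  have hsq₀ : 0 ≤ ncMean n i fun E => cyclicCount E ^ 2 * w E :=
    ncMean_nonneg fun E _ => mul_nonneg (sq_nonneg _) (hw.nonneg E)
  have hsum : |treeMean n i (fun E v => ∑ y ∈ component E v, (w (s(v, y) ::ₘ E) - w E)) -
      ncMean n i fun E => cyclicCount E ^ 2 * w E| ≤ n * ((W + 3) ^ 2 * B * (1 - β)⁻¹ ^ 6) := by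
    calc _ ≤ (W + 1) * (n * B * (1 - β)⁻¹) + W * (W + 4) * B * (1 - β)⁻¹ ^ 6 := by
          refine (abs_sub _ _).trans (add_le_add (hw.abs_treeMean_closure_le.trans ?_) ?_)
          · gcongr
            exact treeMean_order_le h hw.isMergeInvariant hB i hiM
          · rw [abs_of_nonneg hsq₀]
            exact hw.ncMean_cyclicCount_sq_le h hB i hiM
      _ ≤ (W + 1) * (n * B * (1 - β)⁻¹ ^ 6) + n * (W * (W + 4) * B * (1 - β)⁻¹ ^ 6) := by
          gcongr (W + 1) * (n * B * ?_) + ?_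
          · exact le_self_pow₀ hc (by norm_num)
          · exact le_mul_of_one_le_left (by positivity) hn
      _ = n * ((W ^ 2 + 5 * W + 1) * B * (1 - β)⁻¹ ^ 6) := by ring
      _ ≤ _ := by gcongr; nlinarith
  rw [hw.ncMean_succ_eq h.pos, add_sub_cancel_left, abs_mul, abs_of_nonneg (by positivity)]
  calc _ ≤ 1 / (n : ℝ) ^ 2 * (n * ((W + 3) ^ 2 * B * (1 - β)⁻¹ ^ 6)) := by gcongr
    _ = _ := by field_simp

end IsBridgeInvariant

end CycleRemoval

section Correlation

variable {n M : ℕ} {β B K W l : ℝ} {w : Multigraph n → ℝ} {P : Multigraph n → Fin n → Fin n → ℝ}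

/-- The expectation of the sum of `P E v u` over connected pairs in tree components, per vertex. -/
def corrMean (n i : ℕ) (P : Multigraph n → Fin n → Fin n → ℝ) : ℝ :=
  treeMean n i (fun E v => ∑ u ∈ component E v, P E v u) / n

namespace IsCorrelation

lemma one_le_const (hP : IsCorrelation K l w P) (hw : IsBridgeInvariant W w) (hn : 0 < n) :
    1 ≤ K := by
  simpa [hP.self, hw.zero] using hP.abs_le 0 ⟨0, hn⟩ ⟨0, hn⟩

lemma corrMean_zero (hP : IsCorrelation K l w P) (hn : 0 < n) :
    corrMean n 0 P = ncMean n 0 w := by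
  have hn' : (n : ℝ) ≠ 0 := by positivity
  have hcomp : ∀ v : Fin n, component 0 v = {v} := fun v =>
    Finset.ext fun u => by rw [mem_component, reach_zero_iff, Finset.mem_singleton]
  have htree : treeVerts (0 : Multigraph n) = Finset.univ :=
    Finset.eq_univ_of_forall fun v => mem_treeVerts.2 (isTreeAt_zero v)
  simp [corrMean, treeMean, ncMean_zero, hcomp, htree, hP.self, hn']

lemma treeMean_sum_otherTrees_cons (hP : IsCorrelation K l w P) (i : ℕ) :
    treeMean n i (fun E v => ∑ x ∈ component E v, ∑ u ∈ otherTrees E v, P (s(x, u) ::ₘ E) v u) =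
      l * (n * treeMean n i (fun E v => ∑ x ∈ component E v, P E v x) -
        treeMean n i fun E v => (order E v + cyclicCount E) * ∑ x ∈ component E v, P E v x) := by
  rw [eq_comm, mul_sub, sub_eq_iff_eq_add, ← treeMean_const_mul, ← treeMean_const_mul,
    ← treeMean_const_mul, ← treeMean_add]
  refine treeMean_congr fun E v _ hv => ?_
  have hsum : ∑ x ∈ component E v, ∑ u ∈ otherTrees E v, P (s(x, u) ::ₘ E) v u =
      l * ((otherTrees E v).card * ∑ x ∈ component E v, P E v x) := by
    rw [Finset.mul_sum, Finset.mul_sum]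
    refine Finset.sum_congr rfl fun x hx => ?_
    rw [Finset.sum_congr rfl fun u hu => hP.cons (mem_component.1 hx) (mem_otherTrees.1 hu).1,
      Finset.sum_const, nsmul_eq_mul]
    ring
  rw [hsum, ← card_otherTrees_add hv]
  ring

/-- The root of a tree component is joined to `n` minus few vertices, each with correlation `l`
times that of the attachment point. -/
lemma corrMean_succ_sub_eq (hP : IsCorrelation K l w P) (hn : 0 < n) (i : ℕ) :
    corrMean n (i + 1) P - ncMean n (i + 1) w - l * (2 * (i + 1) / n) * corrMean n i P =
      -(ncMean n (i + 1) (fun E => cyclicCount E * w E) + l * (2 * (i + 1) / n ^ 2 * treeMean n i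
        fun E v => (order E v + cyclicCount E) * ∑ x ∈ component E v, P E v x)) / n := by
  have hself : treeMean n (i + 1) (fun E v => P E v v) =
      n * ncMean n (i + 1) w - ncMean n (i + 1) fun E => cyclicCount E * w E := by
    rw [← ncMean_const_mul, ← ncMean_sub]
    refine ncMean_congr fun E _ _ => ?_
    simp only [hP.self, Finset.sum_const, nsmul_eq_mul, ← card_treeVerts_add_cyclicCount E]
    ring
  have hn' : (n : ℝ) ≠ 0 := by positivity
  rw [corrMean, treeMean_sum_component, hself, hP.treeMean_sum_otherTrees_cons, corrMean]
  field_simp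
  ring

variable (hP : IsCorrelation K l w P) (hw : IsBridgeInvariant W w) (h : IsSubcritical n M β)
  (hB : ∀ i ≤ M, ncMean n i w ≤ B)

include hP hw h hB

lemma abs_treeMean_mul_sum_le : ∀ i ≤ M, |treeMean n i fun E v =>
    (order E v + cyclicCount E) * ∑ x ∈ component E v, P E v x| ≤
      n * (K * (W + 2) * B * (1 - β)⁻¹ ^ 4) := by
  intro i hi
  have hc := h.one_le_inv
  have hK := hP.one_le_const hw h.pos
  have hB₀ := hw.isMergeInvariant.nonneg_of_ncMean_le hB
  calc _ ≤ treeMean n i fun E v =>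
          K * (order E v ^ 2 * w E + order E v * (cyclicCount E * w E)) := by
        refine abs_treeMean_le fun E v _ _ => ?_
        rw [abs_mul, abs_of_nonneg (by positivity)]
        calc _ ≤ (order E v + cyclicCount E : ℝ) * ∑ _x ∈ component E v, K * w E := by
              gcongr
              exact (Finset.abs_sum_le_sum_abs _ _).trans
                (Finset.sum_le_sum fun x _ => hP.abs_le E v x)
          _ = _ := by
              rw [Finset.sum_const, nsmul_eq_mul, order]
              ring
    _ = K * (treeMean n i (fun E v => order E v ^ 2 * w E) +
          treeMean n i fun E v => order E v * (cyclicCount E * w E)) := by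
        rw [treeMean_const_mul, treeMean_add]
    _ ≤ K * (2 * n * B * (1 - β)⁻¹ ^ 3 + n * (W * B * (1 - β)⁻¹ ^ 3) * (1 - β)⁻¹) := by
        gcongr
        · exact treeMean_order_sq_le h hw.isMergeInvariant hB i hi
        · exact treeMean_order_le h hw.isMergeInvariant_cyclicCount
            (hw.ncMean_cyclicCount_le h hB) i hi
    _ ≤ K * (2 * n * B * (1 - β)⁻¹ ^ 4 + n * (W * B * (1 - β)⁻¹ ^ 3) * (1 - β)⁻¹) := by
        gcongr
        norm_num
    _ = _ := by ring

lemma abs_corrMean_succ_sub_le (hl : |l| ≤ 1) (i : ℕ) (hi : i + 1 ≤ M) :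
    |corrMean n (i + 1) P - ncMean n (i + 1) w - l * (2 * (i + 1) / n) * corrMean n i P| ≤
      2 * K * (W + 1) * B * (1 - β)⁻¹ ^ 4 / n := by
  have hn : (0 : ℝ) < n := Nat.cast_pos.2 h.pos
  have hW := hw.const_nonneg h.pos
  have hc := h.one_le_inv
  have hK := hP.one_le_const hw h.pos
  have hB₀ := hw.isMergeInvariant.nonneg_of_ncMean_le hB
  have hA := hP.abs_treeMean_mul_sum_le hw h hB i ((Nat.le_succ i).trans hi)
  rw [hP.corrMean_succ_sub_eq h.pos, abs_div, abs_neg, abs_of_pos hn]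
  set A := treeMean n i fun E v => (order E v + cyclicCount E) * ∑ x ∈ component E v, P E v x
  set U := ncMean n (i + 1) fun E => cyclicCount E * w E
  have hU₀ : 0 ≤ U := ncMean_nonneg fun E _ => mul_nonneg (Nat.cast_nonneg _) (hw.nonneg E)
  gcongr
  calc |U + l * (2 * (i + 1) / n ^ 2 * A)| ≤ U + 1 * (2 * (i + 1) / n ^ 2 * |A|) := by
        refine (abs_add_le _ _).trans ?_
        rw [abs_of_nonneg hU₀, abs_mul, abs_mul, abs_of_nonneg (by positivity : (0 : ℝ) ≤ _ / _)]
        gcongr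
    _ ≤ W * B * (1 - β)⁻¹ ^ 3 + 1 * (β / n * (n * (K * (W + 2) * B * (1 - β)⁻¹ ^ 4))) := by
        refine add_le_add (hw.ncMean_cyclicCount_le h hB _ hi) ?_
        gcongr 1 * (?_ * ?_)
        · exact div_nonneg h.nonneg hn.le
        · exact h.two_mul_succ_div_le hi
    _ = 1 * (W * B) * (1 - β)⁻¹ ^ 3 + β * (K * (W + 2) * B * (1 - β)⁻¹ ^ 4) := by field_simp
    _ ≤ K * (W * B) * (1 - β)⁻¹ ^ 4 + 1 * (K * (W + 2) * B * (1 - β)⁻¹ ^ 4) := by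
        gcongr
        · norm_num
        · exact h.lt_one.le
    _ = _ := by ring

end IsCorrelation

end Correlation
/-! ### The recursion for the mean weight -/

section LinearRecursion

variable {B C e l β : ℝ}

lemma abs_mul_le_of_mem_Icc {t : ℝ} (hl : |l| ≤ 1) (ht : t ∈ Set.Icc 0 β) : |l * t| ≤ β := by
  rw [abs_mul, abs_of_nonneg ht.1]
  exact (mul_le_of_le_one_left ht.1 hl).trans ht.2

lemma one_sub_le_one_sub_mul {t : ℝ} (hl : |l| ≤ 1) (ht : t ∈ Set.Icc 0 β) :
    1 - β ≤ 1 - l * t :=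
  sub_le_sub_left ((le_abs_self _).trans (abs_mul_le_of_mem_Icc hl ht)) 1

lemma abs_div_one_sub_mul_sub_le {x y s t : ℝ} (hβ : β < 1) (hl : |l| ≤ 1)
    (hs : s ∈ Set.Icc 0 β) (ht : t ∈ Set.Icc 0 β) (hx : |x| ≤ B) :
    |x / (1 - l * s) - y / (1 - l * t)| ≤ |y - x| * (1 - β)⁻¹ + B * |t - s| * (1 - β)⁻¹ ^ 2 := by
  have hβ' : 0 < 1 - β := sub_pos.2 hβ
  have hB : 0 ≤ B := (abs_nonneg x).trans hx
  have hDs := one_sub_le_one_sub_mul hl hs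
  have hDt := one_sub_le_one_sub_mul hl ht
  have hs₀ := hβ'.trans_le hDs
  have ht₀ := hβ'.trans_le hDt
  have hsplit : x / (1 - l * s) - y / (1 - l * t) =
      (x - y) * (1 - l * t)⁻¹ + x * (l * (s - t)) * ((1 - l * s)⁻¹ * (1 - l * t)⁻¹) := by
    field_simp
    ring
  calc |x / (1 - l * s) - y / (1 - l * t)|
      ≤ |y - x| * (1 - l * t)⁻¹ + |x| * (|l| * |t - s|) * ((1 - l * s)⁻¹ * (1 - l * t)⁻¹) := by
        rw [hsplit, abs_sub_comm y, abs_sub_comm t]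
        refine (abs_add_le _ _).trans_eq ?_
        simp only [abs_mul, abs_inv, abs_of_pos hs₀, abs_of_pos ht₀]
    _ ≤ |y - x| * (1 - β)⁻¹ + B * (1 * |t - s|) * ((1 - β)⁻¹ * (1 - β)⁻¹) := by gcongr
    _ = _ := by ring

lemma IsSubcritical.abs_div_sub_div_succ_le {n M i : ℕ} {h : ℕ → ℝ} (hsub : IsSubcritical n M β)
    (hl : |l| ≤ 1) (hB : ∀ i ≤ M, |h i| ≤ B)
    (hC : ∀ i, i + 1 ≤ M → |h (i + 1) - h i| ≤ C / n) (hi : i + 1 ≤ M) :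
    |h i / (1 - l * (2 * i / n)) - h (i + 1) / (1 - l * (2 * (i + 1) / n))| ≤
      (C * (1 - β)⁻¹ + 2 * B * (1 - β)⁻¹ ^ 2) / n := by
  have hβ : 0 < 1 - β := sub_pos.2 hsub.lt_one
  have ht := hsub.two_mul_div_mem_Icc hi
  have hstep : |2 * ((i : ℝ) + 1) / n - 2 * i / n| = 2 / n := by
    rw [← abs_of_nonneg (show (0 : ℝ) ≤ 2 / n by positivity)]
    congr 1
    ring
  push_cast at ht
  refine (abs_div_one_sub_mul_sub_le hsub.lt_one hl (hsub.two_mul_div_mem_Icc (Nat.le_of_lt hi))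
    ht (hB i (Nat.le_of_lt hi))).trans ?_
  calc _ ≤ C / n * (1 - β)⁻¹ + B * (2 / n) * (1 - β)⁻¹ ^ 2 := by
        rw [hstep]
        gcongr
        exact hC i hi
    _ = _ := by ring

lemma le_mul_inv_one_sub_of_succ_le {a : ℕ → ℝ} {b : ℝ} {M : ℕ} (hβ₀ : 0 ≤ β) (hβ : β < 1)
    (h₀ : a 0 ≤ b * (1 - β)⁻¹) (h : ∀ i, i + 1 ≤ M → a (i + 1) ≤ β * a i + b) :
    ∀ i ≤ M, a i ≤ b * (1 - β)⁻¹ := by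
  intro i
  induction i with
  | zero => exact fun _ => h₀
  | succ i ih =>
    intro hi
    calc a (i + 1) ≤ β * a i + b := h i hi
      _ ≤ β * (b * (1 - β)⁻¹) + b := by
          gcongr
          exact ih (Nat.le_of_lt hi)
      _ = b * (1 - β)⁻¹ := by
          have := (sub_pos.2 hβ).ne'
          field_simp
          ring

/-- A solution of `S (i + 1) ≈ h (i + 1) + l t S i` with slowly varying `h` and `t` follows the
fixed point `h / (1 - l t)` of the recursion. -/
lemma IsSubcritical.abs_sub_div_le_of_rec {n M : ℕ} {S h : ℕ → ℝ} (hsub : IsSubcritical n M β)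
    (hl : |l| ≤ 1) (h₀ : S 0 = h 0) (hB : ∀ i ≤ M, |h i| ≤ B)
    (hC : ∀ i, i + 1 ≤ M → |h (i + 1) - h i| ≤ C / n) (hC₀ : 0 ≤ C) (he : 0 ≤ e)
    (hS : ∀ i, i + 1 ≤ M → |S (i + 1) - h (i + 1) - l * (2 * (i + 1) / n) * S i| ≤ e / n) :
    ∀ i ≤ M, |S i - h i / (1 - l * (2 * i / n))| ≤
      (C * (1 - β)⁻¹ + 2 * B * (1 - β)⁻¹ ^ 2 + e) / n * (1 - β)⁻¹ := by
  have hβ : 0 < 1 - β := sub_pos.2 hsub.lt_one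
  have hB₀ : 0 ≤ B := (abs_nonneg _).trans (hB 0 M.zero_le)
  refine le_mul_inv_one_sub_of_succ_le hsub.nonneg hsub.lt_one ?_ fun i hi => ?_
  · simp only [h₀, Nat.cast_zero, mul_zero, zero_div, sub_zero, div_one, sub_self, abs_zero]
    positivity
  have ht := hsub.two_mul_div_mem_Icc hi
  have hD : 0 < 1 - l * (2 * ((i + 1 : ℕ) : ℝ) / n) := hβ.trans_le (one_sub_le_one_sub_mul hl ht)
  have hlt := abs_mul_le_of_mem_Icc hl ht
  have hfix := hsub.abs_div_sub_div_succ_le hl hB hC hi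
  have hrec := hS i hi
  push_cast at hD hlt ⊢
  set t : ℝ := 2 * (i + 1) / n
  set c := (1 - β)⁻¹
  set y := h i / (1 - l * (2 * i / n))
  calc |S (i + 1) - h (i + 1) / (1 - l * t)|
      = |S (i + 1) - h (i + 1) - l * t * S i +
          (l * t * (S i - y) + l * t * (y - h (i + 1) / (1 - l * t)))| := by
        congr 1
        field_simp
        ring
    _ ≤ e / n + (β * |S i - y| + 1 * ((C * c + 2 * B * c ^ 2) / n)) := by
        refine (abs_add_le _ _).trans (add_le_add hrec ((abs_add_le _ _).trans ?_))
        rw [abs_mul (l * t) (S i - y), abs_mul (l * t) (y - _)]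
        gcongr ?_ * _ + ?_ * ?_
        exact hlt.trans hsub.lt_one.le
    _ = _ := by ring

end LinearRecursion

section MeanRecursion

variable {n M : ℕ} {β B K W l σ : ℝ} {w : Multigraph n → ℝ}

lemma IsCorrelation.abs_corrMean_sub_le {P : Multigraph n → Fin n → Fin n → ℝ}
    (hP : IsCorrelation K l w P) (hw : IsBridgeInvariant W w) (h : IsSubcritical n M β)
    (hB : ∀ i ≤ M, ncMean n i w ≤ B) (hl : |l| ≤ 1) {i : ℕ} (hi : i ≤ M) :
    |corrMean n i P - ncMean n i w / (1 - l * (2 * i / n))| ≤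
      K * (W + 4) ^ 2 * B * (1 - β)⁻¹ ^ 8 / n := by
  have hW := hw.const_nonneg h.pos
  have hc := h.one_le_inv
  have hK := hP.one_le_const hw h.pos
  have hB₀ := hw.isMergeInvariant.nonneg_of_ncMean_le hB
  refine (h.abs_sub_div_le_of_rec (S := fun i => corrMean n i P) (h := fun i => ncMean n i w) hl
    (hP.corrMean_zero h.pos)
    (fun i hi => (abs_of_nonneg (ncMean_nonneg fun E _ => hw.nonneg E)).trans_le (hB i hi))
    (hw.abs_ncMean_succ_sub_le h hB) (by positivity) (by positivity)
    (hP.abs_corrMean_succ_sub_le hw h hB hl) i hi).trans ?_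
  generalize (1 - β)⁻¹ = c at hc ⊢
  rw [div_mul_eq_mul_div]
  gcongr ?_ / _
  calc ((W + 3) ^ 2 * B * c ^ 6 * c + 2 * B * c ^ 2 + 2 * K * (W + 1) * B * c ^ 4) * c
      = 1 * (W + 3) ^ 2 * B * c ^ 8 + 1 * 2 * B * c ^ 3 + K * (2 * (W + 1)) * B * c ^ 5 := by ring
    _ ≤ K * (W + 3) ^ 2 * B * c ^ 8 + K * 2 * B * c ^ 8 + K * (2 * (W + 1)) * B * c ^ 8 := by
        gcongr <;> first | exact hc | norm_num
    _ = K * ((W + 4) ^ 2 - 3) * B * c ^ 8 := by ring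
    _ ≤ K * (W + 4) ^ 2 * B * c ^ 8 := by
        gcongr
        exact sub_le_self _ zero_le_three

variable {ι : Type*} [Fintype ι] {lam : ι → ℝ} {Q : ι → Multigraph n → Fin n → Fin n → ℝ}

/-- The logarithmic derivative, per added edge and per vertex, of the mean weight at edge density
`t = 2 m / n`. -/
def growthRate (σ : ℝ) (lam : ι → ℝ) (t : ℝ) : ℝ :=
  σ * ∑ j, lam j / (1 - lam j * t) - 1 / (1 - t)

lemma IsBridgeInvariant.isCorrelation_self (hw : IsBridgeInvariant W w) :
    IsCorrelation 1 1 w fun E _ _ => w E where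
  self _ _ := rfl
  cons hx hu := by rw [one_mul, hw.cons_of_not_reach fun h => hu (h.symm.trans hx)]
  abs_le E _ _ := by rw [one_mul, abs_of_nonneg (hw.nonneg E)]

namespace IsWeightSystem

lemma treeMean_closure_eq (hw : IsWeightSystem W K σ lam w Q) (hn : 0 < n) (i : ℕ) :
    treeMean n i (fun E v => ∑ y ∈ component E v, (w (s(v, y) ::ₘ E) - w E)) =
      n * (σ * ∑ j, lam j * corrMean n i (Q j) - corrMean n i fun E _ _ => w E) := by
  have hn' : (n : ℝ) ≠ 0 := by positivity
  have hclose : (fun E v => ∑ y ∈ component E v, w (s(v, y) ::ₘ E)) =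
      fun E v => σ * ∑ j, lam j * ∑ y ∈ component E v, Q j E v y := by
    ext E v
    simp only [Finset.mul_sum]
    rw [Finset.sum_comm]
    refine Finset.sum_congr rfl fun y hy => ?_
    rw [hw.cons_of_reach (mem_component.1 hy).symm, Finset.mul_sum]
  simp only [corrMean, mul_sub, ← mul_div_assoc, ← Finset.sum_div, mul_div_cancel₀ _ hn']
  rw [eq_sub_iff_add_eq, ← treeMean_add]
  simp only [← Finset.sum_add_distrib, sub_add_cancel, ← treeMean_const_mul, hclose]
  simp only [treeMean_sum, treeMean_const_mul]

lemma ncMean_succ_sub_mul_eq (hw : IsWeightSystem W K σ lam w Q) (hn : 0 < n) (i : ℕ) (t : ℝ) :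
    ncMean n (i + 1) w - ncMean n i w * (1 + growthRate σ lam t / n) =
      (σ * ∑ j, lam j * (corrMean n i (Q j) - ncMean n i w / (1 - lam j * t)) -
        (corrMean n i (fun E _ _ => w E) - ncMean n i w / (1 - 1 * t)) -
        ncMean n i (fun E => cyclicCount E ^ 2 * w E) / n) / n := by
  have hn' : (n : ℝ) ≠ 0 := by positivity
  have hsum : ∑ j, lam j * (corrMean n i (Q j) - ncMean n i w / (1 - lam j * t)) =
      ∑ j, lam j * corrMean n i (Q j) - ncMean n i w * ∑ j, lam j / (1 - lam j * t) := by
    rw [Finset.mul_sum, ← Finset.sum_sub_distrib]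
    exact Finset.sum_congr rfl fun j _ => by ring
  rw [hw.ncMean_succ_eq hn, hw.treeMean_closure_eq hn, hsum, growthRate]
  generalize ∑ j, lam j / (1 - lam j * t) = Y
  field_simp
  ring

lemma abs_sum_mul_corrMean_sub_le (hw : IsWeightSystem W K σ lam w Q) (h : IsSubcritical n M β)
    (hB : ∀ i ≤ M, ncMean n i w ≤ B) (hlam : ∀ j, |lam j| ≤ 1) {i : ℕ} (hi : i ≤ M) :
    |∑ j, lam j * (corrMean n i (Q j) - ncMean n i w / (1 - lam j * (2 * i / n)))| ≤
      Fintype.card ι * (K * (W + 4) ^ 2 * B * (1 - β)⁻¹ ^ 8 / n) := by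
  refine (Finset.abs_sum_le_sum_abs _ _).trans ?_
  rw [← nsmul_eq_mul, ← Finset.card_univ]
  refine Finset.sum_le_card_nsmul _ _ _ fun j _ => ?_
  rw [abs_mul]
  exact (mul_le_of_le_one_left (abs_nonneg _) (hlam j)).trans
    ((hw.corr j).abs_corrMean_sub_le hw.toIsBridgeInvariant h hB (hlam j) hi)

lemma abs_ncMean_succ_sub_mul_le (hw : IsWeightSystem W K σ lam w Q) (h : IsSubcritical n M β)
    (hB : ∀ i ≤ M, ncMean n i w ≤ B) (hlam : ∀ j, |lam j| ≤ 1) {i : ℕ} (hi : i ≤ M) :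
    |ncMean n (i + 1) w - ncMean n i w * (1 + growthRate σ lam (2 * i / n) / n)| ≤
      (|σ| * (Fintype.card ι * K) + 2) * ((W + 4) ^ 2 * B * (1 - β)⁻¹ ^ 8) / n ^ 2 := by
  have hn : (0 : ℝ) < n := Nat.cast_pos.2 h.pos
  have hW := hw.const_nonneg h.pos
  have hB₀ := hw.isMergeInvariant.nonneg_of_ncMean_le hB
  have hc := h.one_le_inv
  have herr := hw.abs_sum_mul_corrMean_sub_le h hB hlam hi
  have herr₁ := hw.isCorrelation_self.abs_corrMean_sub_le hw.toIsBridgeInvariant h hB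
    abs_one.le hi
  set U := ncMean n i fun E => cyclicCount E ^ 2 * w E
  have hU₀ : 0 ≤ U := ncMean_nonneg fun E _ => mul_nonneg (sq_nonneg _) (hw.nonneg E)
  have hU : U ≤ (W + 4) ^ 2 * B * (1 - β)⁻¹ ^ 8 := by
    refine (hw.ncMean_cyclicCount_sq_le h hB i hi).trans ?_
    rw [sq (W + 4)]
    gcongr
    · exact le_add_of_nonneg_right zero_le_four
    · norm_num
  rw [hw.ncMean_succ_sub_mul_eq h.pos, abs_div, abs_of_pos hn]
  calc _ ≤ (|σ| * (Fintype.card ι * (K * (W + 4) ^ 2 * B * (1 - β)⁻¹ ^ 8 / n)) +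
          1 * (W + 4) ^ 2 * B * (1 - β)⁻¹ ^ 8 / n + (W + 4) ^ 2 * B * (1 - β)⁻¹ ^ 8 / n) / n := by
        gcongr ?_ / _
        refine (abs_sub _ _).trans (add_le_add ((abs_sub _ _).trans (add_le_add ?_ herr₁)) ?_)
        · rw [abs_mul]
          gcongr
        · rw [abs_of_nonneg (by positivity)]
          gcongr
    _ = _ := by
        field_simp
        ring

end IsWeightSystem

end MeanRecursion
/-! ### Integrating the recursion -/

section EulerScheme

variable {A B D K₀ K₁ : ℝ} {F r : ℝ → ℝ}

lemma abs_mul_one_add_sub_le {a b x y : ℝ}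
    (hF : ∀ t ∈ Set.Icc a b, HasDerivAt F (-(r t * F t)) t) (hD : ∀ t ∈ Set.Icc a b, |F t| ≤ D)
    (hr : ∀ t ∈ Set.Icc a b, |r t| ≤ K₀)
    (hlip : ∀ s ∈ Set.Icc a b, ∀ t ∈ Set.Icc a b, |r s - r t| ≤ K₁ * |t - s|)
    (hK₁ : 0 ≤ K₁) (hx : x ∈ Set.Icc a b) (hy : y ∈ Set.Icc a b) (hxy : x ≤ y) :
    |F y * (1 + r x * (y - x)) - F x| ≤ D * (K₁ + K₀ ^ 2) * (y - x) ^ 2 := by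
  have hsub : Set.Icc x y ⊆ Set.Icc a b := Set.Icc_subset_Icc hx.1 hy.2
  have hD₀ : 0 ≤ D := (abs_nonneg _).trans (hD x hx)
  have hderiv : ∀ s ∈ Set.Icc x y, HasDerivWithinAt (fun s => F s * (1 + r x * (s - x)))
      (F s * (r x - r s - r s * r x * (s - x))) (Set.Icc x y) s := fun s hs => by
    refine (((hF s (hsub hs)).mul ((((hasDerivAt_id s).sub_const x).const_mul
      (r x)).const_add 1)).congr_deriv ?_).hasDerivWithinAt
    simp only [id]
    ring
  have hbound : ∀ s ∈ Set.Icc x y,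
      ‖F s * (r x - r s - r s * r x * (s - x))‖ ≤ D * (K₁ + K₀ ^ 2) * (y - x) := fun s hs => by
    have hsx : |s - x| = s - x := abs_of_nonneg (sub_nonneg.2 hs.1)
    have hK₀ : 0 ≤ K₀ := (abs_nonneg _).trans (hr x hx)
    calc ‖F s * (r x - r s - r s * r x * (s - x))‖
        ≤ D * (K₁ * |s - x| + K₀ * K₀ * |s - x|) := by
          rw [Real.norm_eq_abs, abs_mul]
          gcongr
          · exact hD s (hsub hs)
          refine (abs_sub _ _).trans (add_le_add (hlip x hx s (hsub hs)) ?_)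
          rw [abs_mul, abs_mul]
          gcongr
          exacts [hr s (hsub hs), hr x hx]
      _ = D * (K₁ + K₀ ^ 2) * (s - x) := by
          rw [hsx]
          ring
      _ ≤ D * (K₁ + K₀ ^ 2) * (y - x) := by
          gcongr
          exact hs.2
  have hmvt := (convex_Icc x y).norm_image_sub_le_of_norm_hasDerivWithin_le hderiv hbound
    (Set.left_mem_Icc.2 hxy) (Set.right_mem_Icc.2 hxy)
  rw [Real.norm_eq_abs, Real.norm_of_nonneg (sub_nonneg.2 hxy)] at hmvt
  simpa [mul_assoc, sq] using hmvt

lemma IsSubcritical.abs_mul_succ_sub_le_of_euler {n M i : ℕ} {β : ℝ} {x : ℕ → ℝ}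
    (h : IsSubcritical n M β)
    (hF : ∀ t ∈ Set.Icc 0 β, HasDerivAt F (-(r t * F t)) t) (hD : ∀ t ∈ Set.Icc 0 β, |F t| ≤ D)
    (hr : ∀ t ∈ Set.Icc 0 β, |r t| ≤ K₀)
    (hlip : ∀ s ∈ Set.Icc 0 β, ∀ t ∈ Set.Icc 0 β, |r s - r t| ≤ K₁ * |t - s|) (hK₁ : 0 ≤ K₁)
    (hi : i + 1 ≤ M) (hB : |x i| ≤ B)
    (hA : |x (i + 1) - x i * (1 + r (2 * i / n) * (2 / n))| ≤ A / n ^ 2) :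
    |x (i + 1) * F (2 * (i + 1 : ℕ) / n) - x i * F (2 * i / n)| ≤
      D * (A + 4 * B * (K₁ + K₀ ^ 2)) / n ^ 2 := by
  have hB₀ : 0 ≤ B := (abs_nonneg _).trans hB
  have hA₀ := (abs_nonneg _).trans hA
  have hs := h.two_mul_div_mem_Icc (Nat.le_of_lt hi)
  have ht := h.two_mul_div_mem_Icc hi
  have hts : 2 * ((i + 1 : ℕ) : ℝ) / n - 2 * i / n = 2 / n := by
    push_cast
    ring
  have hF' := abs_mul_one_add_sub_le hF hD hr hlip hK₁ hs ht
    (sub_nonneg.1 (by rw [hts]; positivity))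
  rw [hts] at hF'
  set s : ℝ := 2 * i / n
  set t : ℝ := 2 * ((i + 1 : ℕ) : ℝ) / n
  calc |x (i + 1) * F t - x i * F s|
      = |(x (i + 1) - x i * (1 + r s * (2 / n))) * F t +
          x i * (F t * (1 + r s * (2 / n)) - F s)| := by ring_nf
    _ ≤ A / n ^ 2 * D + B * (D * (K₁ + K₀ ^ 2) * (2 / n) ^ 2) := by
        refine (abs_add_le _ _).trans ?_
        rw [abs_mul, abs_mul]
        gcongr
        exact hD t ht
    _ = _ := by ring

/-- If `F` is an integrating factor of `x' = r x`, then `F x` is nearly constant along an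
approximate Euler scheme with time step `2 / n`. -/
lemma IsSubcritical.abs_mul_sub_le_of_euler {n M : ℕ} {β : ℝ} {x : ℕ → ℝ}
    (h : IsSubcritical n M β)
    (hF : ∀ t ∈ Set.Icc 0 β, HasDerivAt F (-(r t * F t)) t) (hD : ∀ t ∈ Set.Icc 0 β, |F t| ≤ D)
    (hr : ∀ t ∈ Set.Icc 0 β, |r t| ≤ K₀)
    (hlip : ∀ s ∈ Set.Icc 0 β, ∀ t ∈ Set.Icc 0 β, |r s - r t| ≤ K₁ * |t - s|)
    (hB : ∀ i ≤ M, |x i| ≤ B) (hA₀ : 0 ≤ A) (hK₁ : 0 ≤ K₁)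
    (hA : ∀ i, i + 1 ≤ M → |x (i + 1) - x i * (1 + r (2 * i / n) * (2 / n))| ≤ A / n ^ 2) :
    |x M * F (2 * M / n) - x 0 * F 0| ≤ D * (A + 4 * B * (K₁ + K₀ ^ 2)) / n := by
  have hn : (0 : ℝ) < n := Nat.cast_pos.2 h.pos
  have hB₀ : 0 ≤ B := (abs_nonneg _).trans (hB 0 M.zero_le)
  have hD₀ : 0 ≤ D := (abs_nonneg _).trans (hD 0 ⟨le_rfl, h.nonneg⟩)
  have hstep := fun i (hi : i + 1 ≤ M) =>
    h.abs_mul_succ_sub_le_of_euler hF hD hr hlip hK₁ hi (hB i (Nat.le_of_lt hi)) (hA i hi)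
  have htel : |x M * F (2 * M / n) - x 0 * F (2 * (0 : ℕ) / n)| ≤
      M * (D * (A + 4 * B * (K₁ + K₀ ^ 2)) / n ^ 2) := by
    rw [← Finset.sum_range_sub (fun i : ℕ => x i * F (2 * i / n))]
    refine (Finset.abs_sum_le_sum_abs _ _).trans ?_
    simpa using Finset.sum_le_card_nsmul (Finset.range M) _ _ fun i hi =>
      hstep i (Finset.mem_range.1 hi)
  have hMn : (M : ℝ) ≤ n := by nlinarith [h.two_mul_le, h.lt_one]
  rw [Nat.cast_zero, mul_zero, zero_div] at htel
  calc _ ≤ M * (D * (A + 4 * B * (K₁ + K₀ ^ 2)) / n ^ 2) := htel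
    _ ≤ n * (D * (A + 4 * B * (K₁ + K₀ ^ 2)) / n ^ 2) := by gcongr
    _ = _ := by field_simp

end EulerScheme

section IntegratingFactor

variable {ι : Type*} [Fintype ι] {β σ s t : ℝ} {lam : ι → ℝ}

lemma abs_growthRate_le (hβ : β < 1) (hlam : ∀ j, |lam j| ≤ 1) (ht : t ∈ Set.Icc 0 β) :
    |growthRate σ lam t| ≤ (|σ| * Fintype.card ι + 1) * (1 - β)⁻¹ := by
  have hβ' : 0 < 1 - β := sub_pos.2 hβ
  have hterm : ∀ {l : ℝ}, |l| ≤ 1 → |l / (1 - l * t)| ≤ (1 - β)⁻¹ := fun {l} hl => by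
    have hD := one_sub_le_one_sub_mul hl ht
    rw [abs_div, abs_of_pos (hβ'.trans_le hD), inv_eq_one_div]
    gcongr
  have hsum : |∑ j, lam j / (1 - lam j * t)| ≤ Fintype.card ι * (1 - β)⁻¹ := by
    refine (Finset.abs_sum_le_sum_abs _ _).trans ?_
    simpa using Finset.sum_le_card_nsmul Finset.univ _ _ fun j _ => hterm (hlam j)
  calc |growthRate σ lam t|
      ≤ |σ| * (Fintype.card ι * (1 - β)⁻¹) + (1 - β)⁻¹ := by
        refine (abs_sub _ _).trans (add_le_add ?_ (by simpa using hterm (l := 1) (by simp)))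
        rw [abs_mul]
        gcongr
    _ = _ := by ring

lemma abs_growthRate_sub_le (hβ : β < 1) (hlam : ∀ j, |lam j| ≤ 1) (hs : s ∈ Set.Icc 0 β)
    (ht : t ∈ Set.Icc 0 β) :
    |growthRate σ lam s - growthRate σ lam t| ≤
      (|σ| * Fintype.card ι + 1) * (1 - β)⁻¹ ^ 2 * |t - s| := by
  have hterm : ∀ {l : ℝ}, |l| ≤ 1 →
      |l / (1 - l * s) - l / (1 - l * t)| ≤ |t - s| * (1 - β)⁻¹ ^ 2 := fun {l} hl => by
    simpa using abs_div_one_sub_mul_sub_le (y := l) hβ hl hs ht hl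
  have hsum : |∑ j, (lam j / (1 - lam j * s) - lam j / (1 - lam j * t))| ≤
      Fintype.card ι * (|t - s| * (1 - β)⁻¹ ^ 2) := by
    refine (Finset.abs_sum_le_sum_abs _ _).trans ?_
    simpa using Finset.sum_le_card_nsmul Finset.univ _ _ fun j _ => hterm (hlam j)
  calc |growthRate σ lam s - growthRate σ lam t|
      = |σ * ∑ j, (lam j / (1 - lam j * s) - lam j / (1 - lam j * t)) -
          (1 / (1 - 1 * s) - 1 / (1 - 1 * t))| := by
        rw [growthRate, growthRate, Finset.sum_sub_distrib, one_mul, one_mul]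
        congr 1
        ring
    _ ≤ |σ| * (Fintype.card ι * (|t - s| * (1 - β)⁻¹ ^ 2)) + |t - s| * (1 - β)⁻¹ ^ 2 := by
        refine (abs_sub _ _).trans (add_le_add ?_ (hterm (by simp)))
        rw [abs_mul]
        gcongr
    _ = _ := by ring

/-- The solution `(1 - t)⁻¹ᐟ² ∏ⱼ (1 - λⱼ t)^(σ/2)` of `F' = -(growthRate / 2) F`, written through
logarithms. -/
def integratingFactor (σ : ℝ) (lam : ι → ℝ) (t : ℝ) : ℝ :=
  Real.exp (σ / 2 * ∑ j, Real.log (1 - lam j * t) - 1 / 2 * Real.log (1 - t))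

lemma hasDerivAt_integratingFactor (σ : ℝ) (ht : t < 1) (hlam : ∀ j, lam j * t < 1) :
    HasDerivAt (integratingFactor σ lam)
      (-(growthRate σ lam t / 2 * integratingFactor σ lam t)) t := by
  have hlog : ∀ l : ℝ, l * t < 1 →
      HasDerivAt (fun t => Real.log (1 - l * t)) (-(l / (1 - l * t))) t := fun l hl => by
    have hd := (((hasDerivAt_id t).const_mul l).const_sub 1).log (sub_pos.2 hl).ne'
    simpa [neg_div] using hd
  have hsum := HasDerivAt.fun_sum (u := Finset.univ) fun j _ => hlog (lam j) (hlam j)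
  have hone : HasDerivAt (fun t => Real.log (1 - t)) (-(1 / (1 - t))) t := by
    simpa using hlog 1 (by simpa using ht)
  refine ((hsum.const_mul (σ / 2)).fun_sub (hone.const_mul (1 / 2))).exp.congr_deriv ?_
  rw [Finset.sum_neg_distrib, ← integratingFactor, growthRate]
  generalize ∑ j, lam j / (1 - lam j * t) = Y
  ring

theorem exists_abs_ncMean_mul_integratingFactor_sub_one_le (W K σ : ℝ) (hβ : β < 1)
    (hlam : ∀ j, |lam j| ≤ 1) :
    ∃ C, ∀ (n M : ℕ) (w : Multigraph n → ℝ) (Q : ι → Multigraph n → Fin n → Fin n → ℝ),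
      IsWeightSystem W K σ lam w Q → IsSubcritical n M β →
        |ncMean n M w * integratingFactor σ lam (2 * M / n) - 1| ≤ C / n := by
  have hderiv : ∀ t ∈ Set.Icc 0 β, HasDerivAt (integratingFactor σ lam)
      (-(growthRate σ lam t / 2 * integratingFactor σ lam t)) t := fun t ht =>
    hasDerivAt_integratingFactor σ (ht.2.trans_lt hβ) fun j => by
      linarith [one_sub_le_one_sub_mul (hlam j) ht]
  obtain ⟨D, hD⟩ := isCompact_Icc.exists_bound_of_continuousOn fun t ht =>
    (hderiv t ht).continuousAt.continuousWithinAt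
  set c := (1 - β)⁻¹
  set B := Real.exp ((W + 1) * c)
  set Γ := |σ| * Fintype.card ι + 1
  set A := (|σ| * (Fintype.card ι * K) + 2) * ((W + 4) ^ 2 * B * c ^ 8)
  refine ⟨D * (A + 4 * B * (Γ * c ^ 2 + (Γ * c) ^ 2)), fun n M w Q hw h => ?_⟩
  have hn : (0 : ℝ) < n := Nat.cast_pos.2 h.pos
  have hB : ∀ i ≤ M, ncMean n i w ≤ B := fun i hi => hw.ncMean_le_exp (h.mono hi)
  have hrec := fun i (hi : i ≤ M) => hw.abs_ncMean_succ_sub_mul_le h hB hlam hi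
  have hA : 0 ≤ A := by
    rw [← zero_mul ((n : ℝ) ^ 2)]
    exact (le_div_iff₀ (by positivity)).1 ((abs_nonneg _).trans (hrec 0 M.zero_le))
  have hmain := h.abs_mul_sub_le_of_euler (x := fun i => ncMean n i w) hderiv hD
    (B := B) (A := A) (K₀ := Γ * c) (K₁ := Γ * c ^ 2) ?_ ?_ ?_ hA (by positivity) ?_
  · simpa [ncMean_zero, hw.zero, integratingFactor] using hmain
  · intro t ht
    rw [abs_div, abs_two]
    exact (half_le_self (abs_nonneg _)).trans (abs_growthRate_le hβ hlam ht)
  · intro s hs t ht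
    rw [← sub_div, abs_div, abs_two]
    exact (half_le_self (abs_nonneg _)).trans (abs_growthRate_sub_le hβ hlam hs ht)
  · exact fun i hi => (abs_of_nonneg (ncMean_nonneg fun E _ => hw.nonneg E)).trans_le (hB i hi)
  · intro i hi
    rw [div_mul_div_cancel₀ two_ne_zero]
    exact hrec i (Nat.le_of_lt hi)

end IntegratingFactor

/-! ### Spectrum of a stochastic symmetric matrix -/

section Spectrum

open scoped Matrix

variable {V : Type*} [Fintype V] [DecidableEq V] {R : Matrix V V ℝ} {v : V → ℝ} {l : ℝ}

lemma abs_le_one_of_mulVec_eq_smul (hR : R ∈ Matrix.rowStochastic ℝ V) (hv : v ≠ 0)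
    (h : R *ᵥ v = l • v) : |l| ≤ 1 := by
  have hnorm : ‖R *ᵥ v‖ ≤ ‖v‖ := (pi_norm_le_iff_of_nonneg (norm_nonneg v)).2 fun a => by
    rw [Matrix.mulVec, dotProduct, ← one_mul ‖v‖, ← Matrix.sum_row_of_mem_rowStochastic hR a,
      Finset.sum_mul]
    refine norm_sum_le_of_le _ fun b _ => ?_
    rw [norm_mul, Real.norm_of_nonneg (Matrix.nonneg_of_mem_rowStochastic hR)]
    exact mul_le_mul_of_nonneg_left (norm_le_pi_norm v b) (Matrix.nonneg_of_mem_rowStochastic hR)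
  rw [h, norm_smul, Real.norm_eq_abs] at hnorm
  exact le_of_mul_le_mul_right (by rwa [one_mul]) (norm_pos_iff.2 hv)

/-- Maximum principle: a weighted average of values `≤ v a` equals `v a` only if every value with
positive weight does. -/
lemma eq_of_mulVec_eq_self_of_forall_le (hR : R ∈ Matrix.rowStochastic ℝ V) (h : R *ᵥ v = v)
    {a b : V} (hmax : ∀ c, v c ≤ v a) (hab : R a b ≠ 0) : v b = v a := by
  have hnonneg : ∀ c ∈ Finset.univ, 0 ≤ R a c * (v a - v c) := fun c _ =>
    mul_nonneg (Matrix.nonneg_of_mem_rowStochastic hR) (sub_nonneg.2 (hmax c))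
  have hsum : ∑ c, R a c * (v a - v c) = 0 := by
    have ha : ∑ c, R a c * v c = v a := congrFun h a
    simp only [mul_sub, Finset.sum_sub_distrib, ← Finset.sum_mul, ha,
      Matrix.sum_row_of_mem_rowStochastic hR, one_mul, sub_self]
  have hzero := (Finset.sum_eq_zero_iff_of_nonneg hnonneg).1 hsum b (Finset.mem_univ b)
  exact (sub_eq_zero.1 ((mul_eq_zero.1 hzero).resolve_left hab)).symm

lemma exists_eq_const_of_mulVec_eq_self (hR : R ∈ Matrix.rowStochastic ℝ V) (hsymm : R.IsSymm)
    (hconn : (SimpleGraph.fromRel fun a b => R a b ≠ 0).Connected) (h : R *ᵥ v = v) :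
    ∃ c, v = Function.const V c := by
  have := hconn.nonempty
  obtain ⟨a, hmax⟩ := Finite.exists_max v
  refine ⟨v a, funext fun b => ?_⟩
  obtain ⟨p⟩ := hconn.preconnected a b
  suffices ∀ {x y}, (SimpleGraph.fromRel fun a b => R a b ≠ 0).Walk x y →
      v x = v a → v y = v a from this p rfl
  intro x y p
  induction p with
  | nil => exact id
  | @cons x y _ hxy _ ih =>
    intro hx
    refine ih (Eq.trans ?_ hx)
    have hne : R x y ≠ 0 := hxy.2.elim id fun hyx => by rwa [← hsymm.apply x y]
    exact eq_of_mulVec_eq_self_of_forall_le hR h (hx ▸ hmax) hne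

variable (hH : R.IsHermitian)

lemma sum_eigenvectorBasis_sq (i : V) : ∑ a, hH.eigenvectorBasis i a ^ 2 = 1 := by
  rw [← EuclideanSpace.real_norm_sq_eq, hH.eigenvectorBasis.norm_eq_one, one_pow]

lemma apply_eq_sum_eigenvalues_mul (a b : V) :
    R a b = ∑ i, hH.eigenvalues i * (hH.eigenvectorBasis i a * hH.eigenvectorBasis i b) := by
  conv_lhs => rw [hH.spectral_theorem, Unitary.conjStarAlgAut_apply, Matrix.mul_apply]
  refine Finset.sum_congr rfl fun i _ => ?_
  simp only [Matrix.mul_diagonal, Matrix.star_apply, Matrix.IsHermitian.eigenvectorUnitary_apply,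
    Function.comp_apply, RCLike.ofReal_real_eq_id, id, star_trivial]
  ring

variable {hH} in
lemma eq_of_eigenvalues_eq_one (hR : R ∈ Matrix.rowStochastic ℝ V)
    (hconn : (SimpleGraph.fromRel fun a b => R a b ≠ 0).Connected) {i j : V}
    (hi : hH.eigenvalues i = 1) (hj : hH.eigenvalues j = 1) : i = j := by
  have hsymm : R.IsSymm := by
    rwa [Matrix.IsHermitian, Matrix.conjTranspose_eq_transpose_of_trivial] at hH
  have hconst : ∀ k, hH.eigenvalues k = 1 → ∃ c, ⇑(hH.eigenvectorBasis k) = Function.const V c :=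
    fun k hk => exists_eq_const_of_mulVec_eq_self hR hsymm hconn <| by
      rw [hH.mulVec_eigenvectorBasis, hk, one_smul]
  obtain ⟨c, hc⟩ := hconst i hi
  obtain ⟨d, hd⟩ := hconst j hj
  by_contra hij
  have hinner := hH.eigenvectorBasis.orthonormal.2 hij
  have hc2 := sum_eigenvectorBasis_sq hH i
  have hd2 := sum_eigenvectorBasis_sq hH j
  simp only [PiLp.inner_apply, hc, hd, Function.const_apply, Finset.sum_const, nsmul_eq_mul,
    RCLike.inner_apply, conj_trivial] at hinner hc2 hd2
  generalize ((Finset.univ : Finset V).card : ℝ) = N at hinner hc2 hd2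
  exact one_ne_zero (α := ℝ) (by
    linear_combination N * (d * c) * hinner - N * d ^ 2 * hc2 - hd2)

lemma existsUnique_eigenvalues_eq_one (hR : R ∈ Matrix.rowStochastic ℝ V)
    (hconn : (SimpleGraph.fromRel fun a b => R a b ≠ 0).Connected) :
    ∃! i, hH.eigenvalues i = 1 := by
  have := hconn.nonempty
  have hmem : (1 : ℝ) ∈ spectrum ℝ R := by
    rw [← Matrix.spectrum_toLin']
    refine (Module.End.hasEigenvalue_of_hasEigenvector (x := 1)
      ⟨Module.End.mem_eigenspace_iff.2 ?_, one_ne_zero⟩).mem_spectrum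
    rw [Matrix.toLin'_apply, one_smul, Matrix.one_vecMul_of_mem_rowStochastic hR]
  rw [hH.spectrum_real_eq_range_eigenvalues] at hmem
  obtain ⟨i, hi⟩ := hmem
  exact ⟨i, hi, fun j hj => eq_of_eigenvalues_eq_one hR hconn hj hi⟩

end Spectrum

/-! ### The asymptotic formula -/

section Asymptotics

open scoped Matrix

lemma prod_filter_ne_map_univ {ι α β : Type*} [Fintype ι] [DecidableEq ι] [DecidableEq α]
    [CommMonoid β] {lam : ι → α} {a : α} {i₀ : ι} (h : ∀ i, lam i = a ↔ i = i₀) (f : α → β) :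
    (((Finset.univ.val.map lam).filter (· ≠ a)).map f).prod =
      ∏ i ∈ Finset.univ.erase i₀, f (lam i) := by
  have hfilter : Finset.univ.erase i₀ = Finset.univ.filter fun i => lam i ≠ a := by
    ext i
    simp [h]
  rw [hfilter, Finset.prod, Finset.filter_val, Multiset.filter_map, Multiset.map_map]
  rfl

lemma integratingFactor_mul_eq_one {ι : Type*} [Fintype ι] {lam : ι → ℝ} {t : ℝ} (σ : ℝ)
    (hone : ∃! i, lam i = 1) (ht : t < 1) (hlam : ∀ j, lam j * t < 1) :
    integratingFactor σ lam t * ((1 - t) ^ ((1 - σ) / 2) *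
        (((Finset.univ.val.map lam).filter (· ≠ 1)).map fun l => 1 - l * t).prod ^ (-(σ / 2))) =
      1 := by
  classical
  obtain ⟨i₀, h₀, huniq⟩ := hone
  have hpos : ∀ j, 0 < 1 - lam j * t := fun j => sub_pos.2 (hlam j)
  rw [prod_filter_ne_map_univ (i₀ := i₀) fun i => ⟨huniq i, fun hi => hi ▸ h₀⟩,
    Real.rpow_def_of_pos (sub_pos.2 ht), Real.rpow_def_of_pos (Finset.prod_pos fun i _ => hpos i),
    Real.log_prod fun i _ => (hpos i).ne', integratingFactor,
    ← Finset.add_sum_erase Finset.univ _ (Finset.mem_univ i₀), h₀, ← Real.exp_add, ← Real.exp_add,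
    Real.exp_eq_one_iff, one_mul]
  generalize ∑ i ∈ Finset.univ.erase i₀, Real.log (1 - lam i * t) = S
  ring

variable {q : ℕ} {R : Matrix (Fin q) (Fin q) ℝ} {σ β : ℝ}

lemma exists_abs_ncMean_normWeight_mul_integratingFactor_sub_one_le (hR : IsVertexTransitive R)
    (hH : R.IsHermitian) (hq : q ≠ 0) (hrow : ∀ i, ∑ j, R i j = 1) (hσ : 0 < σ) (hβ : β < 1)
    (hlam : ∀ i, |hH.eigenvalues i| ≤ 1) :
    ∃ C, ∀ n M : ℕ, IsSubcritical n M β →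
      |ncMean n M (normWeight R σ) * integratingFactor σ hH.eigenvalues (2 * M / n) - 1| ≤
        C / n := by
  obtain ⟨C, hC⟩ := exists_abs_ncMean_mul_integratingFactor_sub_one_le (q * σ) q σ hβ hlam
  exact ⟨C, fun n M => hC n M _ _ <| isWeightSystem_normWeight hR hq hrow hσ
    (sum_eigenvectorBasis_sq hH) (fun i a => congrFun (hH.mulVec_eigenvectorBasis i) a)
    (apply_eq_sum_eigenvalues_mul hH) n⟩

theorem exists_abs_g0_div_sub_one_le (hR : IsVertexTransitive R)
    (hconn : (SimpleGraph.fromRel fun i j : Fin q => R i j ≠ 0).Connected)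
    (hrow : ∀ i, ∑ j, R i j = 1) (hσ : 0 < σ) (hβ : β < 1) :
    ∃ C, ∀ n M : ℕ, IsSubcritical n M β →
      |g0 R σ n M / (totalMass n M * (1 - 2 * (M : ℝ) / n) ^ ((1 - σ) / 2) * (q * σ) ^ (n - M) *
        ((R.charpoly.roots.filter (· ≠ 1)).map fun l => 1 - l * (2 * (M : ℝ) / n)).prod ^
          (-(σ / 2))) - 1| ≤ C / n := by
  have hH : R.IsHermitian := by
    rw [Matrix.IsHermitian, Matrix.conjTranspose_eq_transpose_of_trivial, hR.1]
  have hstoch : R ∈ Matrix.rowStochastic ℝ (Fin q) :=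
    Matrix.mem_rowStochastic_iff_sum.2 ⟨hR.2.1, hrow⟩
  have hroots : R.charpoly.roots = Finset.univ.val.map hH.eigenvalues :=
    hH.roots_charpoly_eq_eigenvalues
  have hlam : ∀ i, |hH.eigenvalues i| ≤ 1 := fun i =>
    abs_le_one_of_mulVec_eq_smul hstoch
      (by simpa using hH.eigenvectorBasis.orthonormal.ne_zero i) (hH.mulVec_eigenvectorBasis i)
  have hq : q ≠ 0 := fun h => (h ▸ hconn.nonempty.some).elim0
  obtain ⟨C, hC⟩ :=
    exists_abs_ncMean_normWeight_mul_integratingFactor_sub_one_le hR hH hq hrow hσ hβ hlam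
  refine ⟨C, fun n M h => ?_⟩
  have ht := h.two_mul_div_mem_Icc le_rfl
  have hfactor := integratingFactor_mul_eq_one σ (existsUnique_eigenvalues_eq_one hH hstoch hconn)
    (ht.2.trans_lt hβ) fun j => by linarith [one_sub_le_one_sub_mul (hlam j) ht]
  rw [← hroots] at hfactor
  have hMn : M ≤ n := by
    have : (0 : ℝ) < n := Nat.cast_pos.2 h.pos
    exact_mod_cast (by nlinarith [h.two_mul_le] : (M : ℝ) ≤ n)
  have hpow : (q * σ : ℝ) ^ (n - M) ≠ 0 :=
    pow_ne_zero _ (mul_ne_zero (Nat.cast_ne_zero.2 hq) hσ.ne')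
  have hmass : totalMass n M ≠ 0 := totalMass_ne_zero h.pos.ne' M
  obtain ⟨hrpow, hprod⟩ := mul_ne_zero_iff.1 (right_ne_zero_of_mul_eq_one hfactor)
  rw [g0_eq_ncMean R hσ.ne' hq h.pos.ne' hMn]
  convert hC n M h using 3
  rw [div_eq_iff (mul_ne_zero (mul_ne_zero (mul_ne_zero hmass hrpow) hpow) hprod)]
  linear_combination -(ncMean n M (normWeight R σ) * (q * σ) ^ (n - M) * totalMass n M) * hfactor

theorem g0_asymptotics_subcritical_general (hR : IsVertexTransitive R)
    (hconn : (SimpleGraph.fromRel fun i j : Fin q => R i j ≠ 0).Connected)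
    (hrow : ∀ i, ∑ j, R i j = 1) {χ : ℝ → ℝ}
    (hχ : ∀ x, χ x = ((R.charpoly.roots.filter (· ≠ 1)).map fun lam => 1 - lam * x).prod)
    (hσ : 0 < σ) {m : ℕ → ℕ} {b : ℝ} (hb : b < 1 / 2)
    (hm : ∀ᶠ n : ℕ in Filter.atTop, (m n : ℝ) / n ≤ b) :
    Filter.Tendsto (fun n : ℕ =>
        g0 R σ n (m n) /
          ((n : ℝ) ^ (2 * m n) / (2 ^ m n * ((m n).factorial : ℝ)) *
            (1 - 2 * (m n : ℝ) / n) ^ ((1 - σ) / 2) *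
            ((q : ℝ) * σ) ^ (n - m n) *
            χ (2 * (m n : ℝ) / n) ^ (-(σ / 2))))
      Filter.atTop (nhds 1) := by
  obtain ⟨C, hC⟩ := exists_abs_g0_div_sub_one_le hR hconn hrow hσ (β := 2 * b) (by linarith)
  rw [tendsto_iff_norm_sub_tendsto_zero]
  refine squeeze_zero' (.of_forall fun n => norm_nonneg _) ?_
    (tendsto_const_div_atTop_nhds_zero_nat C)
  filter_upwards [hm, Filter.eventually_gt_atTop 0] with n hn hpos
  have hb₀ : 0 ≤ b := le_trans (by positivity) hn
  have hle : (m n : ℝ) ≤ b * n := (div_le_iff₀ (Nat.cast_pos.2 hpos)).1 hn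
  rw [hχ]
  exact hC n (m n) ⟨hpos, by linarith, by linarith, by linarith⟩

end Asymptotics

/-- asymptotics of the weight of `(R,σ)`-multigraphs without complex
components, in the subcritical regime. -/
theorem g0_asymptotics_subcritical (q : ℕ)
    (R : Matrix (Fin q) (Fin q) ℝ) (hR : IsVertexTransitive R)
    (hconn : (SimpleGraph.fromRel fun i j : Fin q => R i j ≠ 0).Connected)
    (hrow : ∀ i, ∑ j, R i j = 1)
    (χ : ℝ → ℝ)
    (hχ : ∀ x : ℝ,
      χ x = ((R.charpoly.roots.filter (· ≠ 1)).map fun lam => 1 - lam * x).prod)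
    (σ : ℝ) (hσ : 0 < σ) (m : ℕ → ℕ)
    (hm : ∃ a b : ℝ, 0 < a ∧ a ≤ b ∧ b < 1 / 2 ∧
      ∀ᶠ n : ℕ in Filter.atTop, a ≤ (m n : ℝ) / n ∧ (m n : ℝ) / n ≤ b) :
    Filter.Tendsto (fun n : ℕ =>
        g0 R σ n (m n) /
          ((n : ℝ) ^ (2 * m n) / (2 ^ m n * ((m n).factorial : ℝ)) *
            (1 - 2 * (m n : ℝ) / n) ^ ((1 - σ) / 2) *
            ((q : ℝ) * σ) ^ (n - m n) *
            χ (2 * (m n : ℝ) / n) ^ (-(σ / 2))))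
      Filter.atTop (nhds 1) := by
  obtain ⟨_, b, -, -, hb, hev⟩ := hm
  exact g0_asymptotics_subcritical_general hR hconn hrow hχ hσ hb (hev.mono fun _ h => h.2)

end

end Inhomog
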